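/- arXiv:0806.4687 — 4 statements merged into one kernel-verified Lean document; each statement's English description precedes it below -/
import Mathlib

section
/- Let G be the free group on generators a_1,…,a_n, let H be a free group, and let φ : G → H be a homomorphism that has remnant (i.e. the tuple (φ(a_1),…,φ(a_n)) has remnant). Then φ is injective. -/
/-- Half the total cancellation in the product `x * y` of elements of a free group:
`(|x| + |y| - |x*y|) / 2`. -/
def cancelLen {β : Type} [DecidableEq β] (x y : FreeGroup β) : ℕ :=
  (FreeGroup.norm x + FreeGroup.norm y - FreeGroup.norm (x * y)) / 2

/-- `x` or `x⁻¹`, according to the sign `b` (`true` = exponent `1`, `false` = exponent `-1`). -/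
def pmPow {β : Type} [DecidableEq β] (b : Bool) (x : FreeGroup β) : FreeGroup β :=
  if b then x else x⁻¹

/-- The left cancellation `L_i` of the `i`-th entry of the tuple `t`: the maximum of
`(|h_j^α| + |h_i| - |h_j^α * h_i|)/2` over pairs `(j, α)` with `(j, α) ≠ (i, -1)`. -/
def leftCancel {β : Type} [DecidableEq β] {N : ℕ} (t : Fin N → FreeGroup β) (i : Fin N) : ℕ :=
  Finset.univ.sup fun p : Fin N × Bool =>
    if p.1 = i ∧ p.2 = false then 0 else cancelLen (pmPow p.2 (t p.1)) (t i)

/-- The right cancellation `R_i` of the `i`-th entry of the tuple `t`: the maximum of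
`(|h_i| + |h_k^β| - |h_i * h_k^β|)/2` over pairs `(k, β)` with `(k, β) ≠ (i, -1)`. -/
def rightCancel {β : Type} [DecidableEq β] {N : ℕ} (t : Fin N → FreeGroup β) (i : Fin N) : ℕ :=
  Finset.univ.sup fun p : Fin N × Bool =>
    if p.1 = i ∧ p.2 = false then 0 else cancelLen (t i) (pmPow p.2 (t p.1))

/-- The remnant length `|Rem_t h_i| = |h_i| - L_i - R_i` of the `i`-th entry of `t`. -/
def remLen {β : Type} [DecidableEq β] {N : ℕ} (t : Fin N → FreeGroup β) (i : Fin N) : ℕ :=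
  FreeGroup.norm (t i) - leftCancel t i - rightCancel t i

/-- A tuple has remnant if `|h_i| - L_i - R_i ≥ 1` for all `i`. -/
def HasRemnant {β : Type} [DecidableEq β] {N : ℕ} (t : Fin N → FreeGroup β) : Prop :=
  ∀ i, 1 ≤ remLen t i

/-!
In terms of the cancellation `c(x, y) = (|x| + |y| - |x y|) / 2`, the only fact needed about lengths
in a free group is that `H` acts on a tree: `min (c(x, y)) (c(y⁻¹, z)) ≤ c(x, z)`. Let `x` and `y`
be the images of the first two letters of a reduced word and `z` the image of the rest after `y`. By
induction `z` cancels so little of `y` on the right that `y z` still begins with more of `y` than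
`x` can cancel. So `x` cancels no more against `y z` than against `y`. In particular `x` is never
cancelled completely, and the image of a nonempty reduced word is not trivial.
-/

theorem mk_cons_eq_mul {ι : Type*} (s : ι × Bool) (l : List (ι × Bool)) :
    FreeGroup.mk (s :: l) = FreeGroup.mk [s] * FreeGroup.mk l := by
  rw [FreeGroup.mul_mk, List.singleton_append]

section LyndonLength

variable {ι H Λ : Type*} [Group H] [AddCommGroup Λ]

/-- Twice the cancellation in the product `x * y` with respect to a length function `ℓ`. It is not
halved, so that lengths may lie in any ordered abelian group. -/
def twiceCancel (ℓ : H → Λ) (x y : H) : Λ :=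
  ℓ x + ℓ y - ℓ (x * y)

variable [LinearOrder Λ]

/-- A Lyndon length function on a group, such as `ℓ x = d (p, x • p)` for an action by isometries on
a `Λ`-tree with base point `p`. In that case the last axiom is `0`-hyperbolicity of the orbit of
`p`. -/
structure IsLyndonLength (ℓ : H → Λ) : Prop where
  map_one : ℓ 1 = 0
  map_inv : ∀ x, ℓ x⁻¹ = ℓ x
  min_twiceCancel_le :
    ∀ x y z, min (twiceCancel ℓ x y) (twiceCancel ℓ y⁻¹ z) ≤ twiceCancel ℓ x z

/-- The remnant condition for a homomorphism `φ` out of a free group, with upper bounds in place of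
maxima, so that it makes sense for infinitely many generators. For a letter `s`, that is, a
generator or its inverse, `r s` bounds twice the cancellation of `φ s` with the image of a letter
other than `s⁻¹` to its right. The cancellation on the left of `φ s` is then bounded by `r s⁻¹`,
since `c(x, y) = c(y⁻¹, x⁻¹)`. The letter `s⁻¹` is encoded as `(s.1, !s.2)`. -/
structure IsRemnantBound (ℓ : H → Λ) (φ : FreeGroup ι →* H) (r : ι × Bool → Λ) : Prop where
  twiceCancel_le : ∀ s u, FreeGroup.IsReduced [s, u] →
    twiceCancel ℓ (φ (FreeGroup.mk [s])) (φ (FreeGroup.mk [u])) ≤ r s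
  add_lt : ∀ s, r s + r (s.1, !s.2) < 2 • ℓ (φ (FreeGroup.mk [s]))

variable {ℓ : H → Λ} {φ : FreeGroup ι →* H} {r : ι × Bool → Λ}

namespace IsLyndonLength

theorem twiceCancel_inv_inv (hℓ : IsLyndonLength ℓ) (x y : H) :
    twiceCancel ℓ y⁻¹ x⁻¹ = twiceCancel ℓ x y := by
  rw [twiceCancel, twiceCancel, ← mul_inv_rev, hℓ.map_inv, hℓ.map_inv, hℓ.map_inv, add_comm]

theorem twiceCancel_one_right (hℓ : IsLyndonLength ℓ) (x : H) : twiceCancel ℓ x 1 = 0 := by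
  simp [twiceCancel, hℓ.map_one]

theorem twiceCancel_self_inv (hℓ : IsLyndonLength ℓ) (x : H) :
    twiceCancel ℓ x x⁻¹ = 2 • ℓ x := by
  simp [twiceCancel, hℓ.map_one, hℓ.map_inv, two_nsmul]

theorem twiceCancel_inv_mul (hℓ : IsLyndonLength ℓ) (y z : H) :
    twiceCancel ℓ y⁻¹ (y * z) = 2 • ℓ y - twiceCancel ℓ y z := by
  rw [twiceCancel, twiceCancel, inv_mul_cancel_left, hℓ.map_inv, two_nsmul]
  abel

variable [IsOrderedAddMonoid Λ]

theorem twiceCancel_nonneg (hℓ : IsLyndonLength ℓ) (x y : H) : 0 ≤ twiceCancel ℓ x y := by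
  simpa [twiceCancel, hℓ.map_one] using hℓ.min_twiceCancel_le x 1 y

theorem twiceCancel_mul_right_le (hℓ : IsLyndonLength ℓ) {x y z : H}
    (h : twiceCancel ℓ x y + twiceCancel ℓ y z < 2 • ℓ y) :
    twiceCancel ℓ x (y * z) ≤ twiceCancel ℓ x y := by
  have hmin := hℓ.min_twiceCancel_le x (y * z) y
  have hlt : twiceCancel ℓ x y < twiceCancel ℓ (y * z)⁻¹ y := by
    rw [← hℓ.twiceCancel_inv_inv (y * z)⁻¹, inv_inv, hℓ.twiceCancel_inv_mul]
    exact lt_sub_iff_add_lt.2 h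
  exact (min_le_iff.1 hmin).resolve_right hlt.not_ge

end IsLyndonLength

namespace IsRemnantBound

theorem twiceCancel_le_inv (hr : IsRemnantBound ℓ φ r) (hℓ : IsLyndonLength ℓ) {s u : ι × Bool}
    (hsu : FreeGroup.IsReduced [s, u]) :
    twiceCancel ℓ (φ (FreeGroup.mk [s])) (φ (FreeGroup.mk [u])) ≤ r (u.1, !u.2) := by
  have hus : FreeGroup.IsReduced [(u.1, !u.2), (s.1, !s.2)] := by
    simp only [FreeGroup.isReduced_cons_cons, FreeGroup.IsReduced.singleton] at hsu ⊢
    grind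
  calc twiceCancel ℓ (φ (FreeGroup.mk [s])) (φ (FreeGroup.mk [u]))
      = twiceCancel ℓ (φ (FreeGroup.mk [(u.1, !u.2)])) (φ (FreeGroup.mk [(s.1, !s.2)])) := by
        rw [← hℓ.twiceCancel_inv_inv, ← map_inv, ← map_inv]
        rfl
    _ ≤ r (u.1, !u.2) := hr.twiceCancel_le _ _ hus

variable [IsOrderedAddMonoid Λ]

theorem nonneg (hr : IsRemnantBound ℓ φ r) (hℓ : IsLyndonLength ℓ) (s : ι × Bool) : 0 ≤ r s :=
  (hℓ.twiceCancel_nonneg _ _).trans (hr.twiceCancel_le s s (by simp))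

theorem twiceCancel_le_of_isReduced_cons (hr : IsRemnantBound ℓ φ r) (hℓ : IsLyndonLength ℓ)
    {s : ι × Bool} {l : List (ι × Bool)} (hl : FreeGroup.IsReduced (s :: l)) :
    twiceCancel ℓ (φ (FreeGroup.mk [s])) (φ (FreeGroup.mk l)) ≤ r s := by
  induction l generalizing s with
  | nil => simpa [← FreeGroup.one_eq_mk, hℓ.twiceCancel_one_right] using hr.nonneg hℓ s
  | cons u l ih =>
    have hsu : FreeGroup.IsReduced [s, u] := hl.infix ⟨[], l, rfl⟩
    have hul : FreeGroup.IsReduced (u :: l) := hl.infix ⟨[s], [], by simp⟩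
    rw [mk_cons_eq_mul u, map_mul]
    refine (hℓ.twiceCancel_mul_right_le ?_).trans (hr.twiceCancel_le s u hsu)
    calc _ ≤ r (u.1, !u.2) + r u := add_le_add (hr.twiceCancel_le_inv hℓ hsu) (ih hul)
      _ = r u + r (u.1, !u.2) := add_comm _ _
      _ < _ := hr.add_lt u

theorem map_mk_cons_ne_one (hr : IsRemnantBound ℓ φ r) (hℓ : IsLyndonLength ℓ)
    {s : ι × Bool} {l : List (ι × Bool)} (hl : FreeGroup.IsReduced (s :: l)) :
    φ (FreeGroup.mk (s :: l)) ≠ 1 := by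
  intro h
  rw [mk_cons_eq_mul, map_mul] at h
  have hle := hr.twiceCancel_le_of_isReduced_cons hℓ hl
  rw [eq_inv_of_mul_eq_one_right h, hℓ.twiceCancel_self_inv] at hle
  have hlt : r s < 2 • ℓ (φ (FreeGroup.mk [s])) :=
    (le_add_of_nonneg_right (hr.nonneg hℓ _)).trans_lt (hr.add_lt s)
  exact hlt.not_ge hle

end IsRemnantBound

theorem injective_of_remnant_general [IsOrderedAddMonoid Λ] (hℓ : IsLyndonLength ℓ)
    (hr : IsRemnantBound ℓ φ r) : Function.Injective φ := by
  classical
  refine (injective_iff_map_eq_one φ).2 fun w hw => ?_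
  rw [← FreeGroup.mk_toWord (x := w)] at hw
  have hred : FreeGroup.IsReduced w.toWord := FreeGroup.isReduced_toWord
  rw [← FreeGroup.toWord_eq_nil_iff]
  cases hword : w.toWord with
  | nil => rfl
  | cons s l =>
    rw [hword] at hw hred
    exact absurd hw (hr.map_mk_cons_ne_one hℓ hred)

end LyndonLength

section CommonPrefix

variable {γ : Type*} [DecidableEq γ]

/-- The length of the longest common prefix of two lists, used to measure cancellation between
reduced words. -/
def commonPrefixLength : List γ → List γ → ℕ
  | x :: A, y :: B => if x = y then commonPrefixLength A B + 1 else 0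
  | _, _ => 0

theorem min_commonPrefixLength_le (A B C : List γ) :
    min (commonPrefixLength A B) (commonPrefixLength B C) ≤ commonPrefixLength A C := by
  induction A generalizing B C with
  | nil => simp [commonPrefixLength]
  | cons a A ih => cases B <;> cases C <;> grind [commonPrefixLength]

end CommonPrefix

section FreeGroupNorm

variable {β : Type*}

theorem isReduced_invRev {A : List (β × Bool)} (hA : FreeGroup.IsReduced A) :
    FreeGroup.IsReduced (FreeGroup.invRev A) := by
  classical
  rw [FreeGroup.isReduced_iff_reduce_eq, FreeGroup.reduce_invRev, hA.reduce_eq]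

theorem isReduced_invRev_cons_append_cons {a b : β × Bool} {A B : List (β × Bool)}
    (hA : FreeGroup.IsReduced (a :: A)) (hB : FreeGroup.IsReduced (b :: B)) (hab : a ≠ b) :
    FreeGroup.IsReduced (FreeGroup.invRev (a :: A) ++ b :: B) := by
  have hinv := isReduced_invRev hA
  rw [FreeGroup.invRev_cons] at hinv ⊢
  refine hinv.append_overlap ?_ (by simp [FreeGroup.invRev])
  have hne : a.1 = b.1 → (!a.2) = b.2 := by grind
  exact FreeGroup.isReduced_cons_cons.2 ⟨hne, hB⟩

variable [DecidableEq β]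

theorem norm_inv_mk_mul_mk_add {A B : List (β × Bool)} (hA : FreeGroup.IsReduced A)
    (hB : FreeGroup.IsReduced B) :
    FreeGroup.norm ((FreeGroup.mk A)⁻¹ * FreeGroup.mk B) + 2 * commonPrefixLength A B =
      A.length + B.length := by
  induction A generalizing B with
  | nil => simp [commonPrefixLength, FreeGroup.inv_mk, FreeGroup.norm, hB.reduce_eq]
  | cons a A ih =>
    cases B with
    | nil =>
      simp [commonPrefixLength, FreeGroup.inv_mk, FreeGroup.norm, (isReduced_invRev hA).reduce_eq]
    | cons b B =>
      by_cases hab : a = b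
      · subst hab
        have ih_tail := ih (hA.infix ⟨[a], [], by simp⟩) (B := B) (hB.infix ⟨[a], [], by simp⟩)
        rw [mk_cons_eq_mul a A, mk_cons_eq_mul a B, mul_inv_rev, mul_assoc, inv_mul_cancel_left]
        simp only [commonPrefixLength, if_true, List.length_cons]
        lia
      · have hred := isReduced_invRev_cons_append_cons hA hB hab
        simp [FreeGroup.inv_mk, FreeGroup.norm, hred.reduce_eq, commonPrefixLength, hab]

theorem norm_mul_add_two_mul_commonPrefixLength (x y : FreeGroup β) :
    FreeGroup.norm (x * y) + 2 * commonPrefixLength x⁻¹.toWord y.toWord =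
      FreeGroup.norm x + FreeGroup.norm y := by
  have h := norm_inv_mk_mul_mk_add (FreeGroup.isReduced_toWord (x := x⁻¹))
    (FreeGroup.isReduced_toWord (x := y))
  rw [FreeGroup.mk_toWord, FreeGroup.mk_toWord, inv_inv] at h
  rw [h, ← FreeGroup.norm, ← FreeGroup.norm, FreeGroup.norm_inv_eq]

theorem twiceCancel_norm (x y : FreeGroup β) :
    twiceCancel (fun w => (FreeGroup.norm w : ℤ)) x y =
      2 * commonPrefixLength x⁻¹.toWord y.toWord := by
  have := norm_mul_add_two_mul_commonPrefixLength x y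
  simp only [twiceCancel]
  lia

theorem isLyndonLength_norm : IsLyndonLength fun w : FreeGroup β => (FreeGroup.norm w : ℤ) where
  map_one := by simp
  map_inv := by simp
  min_twiceCancel_le x y z := by
    have := min_commonPrefixLength_le x⁻¹.toWord y.toWord z.toWord
    simp only [twiceCancel_norm, inv_inv]
    lia

end FreeGroupNorm

section HasRemnant

variable {β : Type} [DecidableEq β] {N : ℕ}

theorem twiceCancel_norm_eq_two_mul_cancelLen (x y : FreeGroup β) :
    twiceCancel (fun w => (FreeGroup.norm w : ℤ)) x y = 2 * cancelLen x y := by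
  have := norm_mul_add_two_mul_commonPrefixLength x y
  simp only [twiceCancel, cancelLen]
  lia

theorem cancelLen_inv_inv (x y : FreeGroup β) : cancelLen y⁻¹ x⁻¹ = cancelLen x y := by
  simp only [cancelLen, ← mul_inv_rev, FreeGroup.norm_inv_eq, add_comm]

theorem pmPow_not (b : Bool) (x : FreeGroup β) : pmPow (!b) x = (pmPow b x)⁻¹ := by
  cases b <;> simp [pmPow]

theorem map_mk_singleton {ι : Type*} (φ : FreeGroup ι →* FreeGroup β) (s : ι × Bool) :
    φ (FreeGroup.mk [s]) = pmPow s.2 (φ (FreeGroup.of s.1)) := by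
  rcases s with ⟨i, _ | _⟩
  · exact map_inv φ (FreeGroup.of i)
  · rfl

theorem cancelLen_le_rightCancel (t : Fin N → FreeGroup β) {i : Fin N} {u : Fin N × Bool}
    (hu : ¬(u.1 = i ∧ u.2 = false)) : cancelLen (t i) (pmPow u.2 (t u.1)) ≤ rightCancel t i :=
  Finset.le_sup_of_le (Finset.mem_univ u) (if_neg hu).ge

theorem cancelLen_le_leftCancel (t : Fin N → FreeGroup β) {i : Fin N} {u : Fin N × Bool}
    (hu : ¬(u.1 = i ∧ u.2 = false)) : cancelLen (pmPow u.2 (t u.1)) (t i) ≤ leftCancel t i :=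
  Finset.le_sup_of_le (Finset.mem_univ u) (if_neg hu).ge

/-- The right cancellation of the letter `t_i^{±1}`. For the inverse letter this is the left
cancellation of `t_i`. -/
def letterRightCancel (t : Fin N → FreeGroup β) (s : Fin N × Bool) : ℕ :=
  if s.2 then rightCancel t s.1 else leftCancel t s.1

theorem cancelLen_le_letterRightCancel (t : Fin N → FreeGroup β) {s u : Fin N × Bool}
    (hsu : FreeGroup.IsReduced [s, u]) :
    cancelLen (pmPow s.2 (t s.1)) (pmPow u.2 (t u.1)) ≤ letterRightCancel t s := by
  have himp : s.1 = u.1 → s.2 = u.2 := (FreeGroup.isReduced_cons_cons.1 hsu).1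
  rcases s with ⟨i, _ | _⟩
  · rw [← cancelLen_inv_inv, ← pmPow_not, ← pmPow_not]
    exact cancelLen_le_leftCancel t (u := (u.1, !u.2)) (by grind)
  · exact cancelLen_le_rightCancel t (by grind)

theorem HasRemnant.letterRightCancel_add_lt {t : Fin N → FreeGroup β} (ht : HasRemnant t)
    (s : Fin N × Bool) :
    letterRightCancel t s + letterRightCancel t (s.1, !s.2) <
      FreeGroup.norm (pmPow s.2 (t s.1)) := by
  have hrem : 1 ≤ FreeGroup.norm (t s.1) - leftCancel t s.1 - rightCancel t s.1 := ht s.1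
  rcases s with ⟨i, _ | _⟩
  · simp only [letterRightCancel, pmPow, Bool.false_eq_true, if_false, Bool.not_false, if_true,
      FreeGroup.norm_inv_eq]
    lia
  · simp only [letterRightCancel, pmPow, Bool.not_true, Bool.false_eq_true, if_false, if_true]
    lia

theorem HasRemnant.isRemnantBound {φ : FreeGroup (Fin N) →* FreeGroup β}
    (hφ : HasRemnant fun i => φ (FreeGroup.of i)) :
    IsRemnantBound (fun w => (FreeGroup.norm w : ℤ)) φ
      fun s => 2 * (letterRightCancel (fun i => φ (FreeGroup.of i)) s : ℤ) where
  twiceCancel_le s u hsu := by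
    have := cancelLen_le_letterRightCancel (fun i => φ (FreeGroup.of i)) hsu
    rw [twiceCancel_norm_eq_two_mul_cancelLen, map_mk_singleton, map_mk_singleton]
    lia
  add_lt s := by
    have := hφ.letterRightCancel_add_lt s
    rw [map_mk_singleton, nsmul_eq_mul]
    lia

end HasRemnant

/-- A homomorphism of free groups with remnant is injective. -/
theorem injective_of_remnant {n : ℕ} {β : Type} [DecidableEq β]
    (φ : FreeGroup (Fin n) →* FreeGroup β)
    (hrem : HasRemnant fun i : Fin n => φ (FreeGroup.of i)) :
    Function.Injective φ :=
  injective_of_remnant_general isLyndonLength_norm hrem.isRemnantBound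
end

section
/- For any integer n > 1, lim_{p→∞} (1/(2p+1)^n) · Σ_{t ∈ ([−p,p] ∩ ℤ)^n, t ≠ (0,…,0)} 1/gcd(t) = ζ(n+1)/ζ(n), where gcd(t) denotes the greatest common divisor of the entries of t and ζ is the Riemann zeta function. Equivalently, the expected value of the density of the image of a random homomorphism from the free group of rank n to ℤ equals ζ(n+1)/ζ(n). -/
/-!
Möbius inversion writes `f (gcd t)` as `∑ d ∣ gcd t, (μ * f) d`. The proportion of lattice points of
the box `[-p, p]ⁿ` all of whose entries are divisible by `d` tends to `d⁻ⁿ` and is at most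
`2ⁿ d⁻ⁿ` uniformly in `p`, so by dominated convergence the mean of `f (gcd t)` tends to
`∑ d, (μ * f) d / dⁿ = L(f, n) / ζ(n)`. For `f m = m ^ s` the numerator is `ζ(n - s)`; the density
of the image is the case `s = -1`.
-/

open Filter Finset Topology

open scoped ArithmeticFunction.Moebius LSeries.notation

theorem card_Icc_neg_filter_dvd (d p : ℕ) :
    #{x ∈ Icc (-(p : ℤ)) p | (d : ℤ) ∣ x} = 2 * (p / d) + 1 := by
  rcases d.eq_zero_or_pos with rfl | hd
  · simp [filter_eq']
  have hd' : (0 : ℤ) < d := by exact_mod_cast hd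
  have multiples_eq_image : {x ∈ Icc (-(p : ℤ)) p | (d : ℤ) ∣ x} =
      (Icc (-(p / d : ℤ)) (p / d : ℤ)).image ((d : ℤ) * ·) := by
    ext x
    simp only [mem_filter, mem_image, mem_Icc, ← abs_le]
    have abs_mul_le_iff (y : ℤ) : |d * y| ≤ p ↔ |y| ≤ (p / d : ℤ) := by
      rw [abs_mul, Nat.abs_cast, mul_comm, Int.le_ediv_iff_mul_le hd']
    constructor
    · rintro ⟨hx, y, rfl⟩
      exact ⟨y, (abs_mul_le_iff y).1 hx, rfl⟩
    · rintro ⟨y, hy, rfl⟩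
      exact ⟨(abs_mul_le_iff y).2 hy, dvd_mul_right _ _⟩
  rw [multiples_eq_image, card_image_of_injective _ (mul_right_injective₀ hd'.ne'), Int.card_Icc]
  norm_cast
  lia

theorem tendsto_two_mul_div_add_one_div (d : ℕ) :
    Tendsto (fun p : ℕ => (2 * (p / d : ℕ) + 1 : ℝ) / (2 * p + 1)) atTop (𝓝 (d : ℝ)⁻¹) := by
  have hinv : Tendsto (fun p : ℕ => (p : ℝ)⁻¹) atTop (𝓝 0) := tendsto_inv_atTop_nhds_zero_nat
  have hfloor : Tendsto (fun p : ℕ => ((p / d : ℕ) : ℝ) / p) atTop (𝓝 (d : ℝ)⁻¹) := by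
    refine ((tendsto_nat_floor_mul_div_atTop (R := ℝ) (a := (d : ℝ)⁻¹) (by positivity)).comp
      tendsto_natCast_atTop_atTop).congr fun p => ?_
    rw [Function.comp_apply, inv_mul_eq_div, Nat.floor_div_eq_div]
  have hquot := ((hfloor.const_mul 2).add hinv).div (hinv.const_add 2) (by norm_num)
  rw [add_zero, add_zero, mul_div_cancel_left₀ _ two_ne_zero] at hquot
  refine hquot.congr' ?_
  filter_upwards [eventually_ne_atTop 0] with p hp
  simp only [Pi.div_apply]
  field_simp

section Gcd

variable {ι : Type*}

theorem univ_gcd_ne_zero [Fintype ι] {α : Type*} [CommMonoidWithZero α] [NormalizedGCDMonoid α]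
    {t : ι → α} (ht : t ≠ 0) : univ.gcd t ≠ 0 := by
  simpa [Finset.gcd_eq_zero_iff, funext_iff] using ht

theorem mem_divisors_natAbs_univ_gcd [Fintype ι] {t : ι → ℤ} (ht : t ≠ 0) {d : ℕ} :
    d ∈ (univ.gcd t).natAbs.divisors ↔ ∀ i, (d : ℤ) ∣ t i := by
  simp [univ_gcd_ne_zero ht, ← Int.natCast_dvd, Finset.dvd_gcd_iff]

theorem natCast_natAbs_finset_gcd {R : Type*} [AddGroupWithOne R] (s : Finset ι) (t : ι → ℤ) :
    ((s.gcd t).natAbs : R) = (s.gcd t : ℤ) := by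
  rw [Nat.cast_natAbs, Int.abs_eq_normalize, Finset.normalize_gcd]

end Gcd

section BoxMean

variable {ι E : Type*} [Fintype ι] [DecidableEq ι]

variable (ι) in
/-- The nonzero points of `ℤ^ι` all of whose coordinates lie in `[-p, p]`. -/
noncomputable def puncturedBox (p : ℕ) : Finset (ι → ℤ) :=
  (Fintype.piFinset fun _ : ι => Icc (-(p : ℤ)) p).filter (fun t => t ≠ 0)

variable (ι) in
/-- The proportion of points of `[-p, p]^ι` that are nonzero and have all coordinates divisible by
`d`. The denominator counts the origin as well. -/
noncomputable def multiplesDensity (d p : ℕ) : ℝ :=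
  #{t ∈ puncturedBox ι p | ∀ i, (d : ℤ) ∣ t i} / (2 * p + 1) ^ Fintype.card ι

/-- The mean of `f` over the integer points of `[-p, p]^ι`, the origin contributing `0`. -/
noncomputable def boxMean [AddCommMonoid E] [Module ℝ E] (p : ℕ) (f : (ι → ℤ) → E) : E :=
  ((2 * p + 1 : ℝ) ^ Fintype.card ι)⁻¹ • ∑ t ∈ puncturedBox ι p, f t

theorem ne_zero_of_mem_puncturedBox {p : ℕ} {t : ι → ℤ} (ht : t ∈ puncturedBox ι p) : t ≠ 0 :=
  (mem_filter.1 ht).2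

variable (ι) in
theorem card_puncturedBox_filter_dvd_add_one (d p : ℕ) :
    #{t ∈ puncturedBox ι p | ∀ i, (d : ℤ) ∣ t i} + 1 = (2 * (p / d) + 1) ^ Fintype.card ι := by
  have insert_origin : insert 0 {t ∈ puncturedBox ι p | ∀ i, (d : ℤ) ∣ t i} =
      Fintype.piFinset fun _ : ι => {x ∈ Icc (-(p : ℤ)) p | (d : ℤ) ∣ x} := by
    ext t
    rcases eq_or_ne t 0 with rfl | ht
    · simp
    · simp [puncturedBox, ht, forall_and]
  rw [← card_insert_of_notMem (a := 0) (by simp [puncturedBox]), insert_origin,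
    Fintype.card_piFinset, prod_const, card_univ, card_Icc_neg_filter_dvd]

variable (ι) in
theorem multiplesDensity_eq (d p : ℕ) :
    multiplesDensity ι d p = ((2 * (p / d : ℕ) + 1 : ℝ) / (2 * p + 1)) ^ Fintype.card ι -
      (1 / (2 * p + 1)) ^ Fintype.card ι := by
  have hcard : (#{t ∈ puncturedBox ι p | ∀ i, (d : ℤ) ∣ t i} : ℝ) + 1 =
      (2 * (p / d : ℕ) + 1) ^ Fintype.card ι := by
    exact_mod_cast card_puncturedBox_filter_dvd_add_one ι d p
  rw [multiplesDensity, eq_sub_of_add_eq hcard, sub_div, div_pow, div_pow, one_pow]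

theorem multiplesDensity_nonneg (d p : ℕ) : 0 ≤ multiplesDensity ι d p := by
  unfold multiplesDensity
  positivity

theorem multiplesDensity_le (d p : ℕ) :
    multiplesDensity ι d p ≤ 2 ^ Fintype.card ι * ((d : ℝ) ^ Fintype.card ι)⁻¹ := by
  rw [multiplesDensity_eq]
  rcases Nat.eq_zero_or_pos (p / d) with hdiv | hdiv
  · rw [hdiv, Nat.cast_zero, mul_zero, zero_add, sub_self]
    positivity
  obtain ⟨hd, hdp⟩ := Nat.div_pos_iff.1 hdiv
  have hd' : (0 : ℝ) < d := by exact_mod_cast hd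
  have ratio_le : (2 * (p / d : ℕ) + 1 : ℝ) / (2 * p + 1) ≤ 2 / d := by
    rw [div_le_div_iff₀ (by positivity) hd']
    have := Nat.div_mul_le_self p d
    exact_mod_cast (by lia : (2 * (p / d) + 1) * d ≤ 2 * (2 * p + 1))
  calc _ ≤ ((2 * (p / d : ℕ) + 1 : ℝ) / (2 * p + 1)) ^ Fintype.card ι :=
        sub_le_self _ (by positivity)
    _ ≤ (2 / d : ℝ) ^ Fintype.card ι := by gcongr
    _ = 2 ^ Fintype.card ι * ((d : ℝ) ^ Fintype.card ι)⁻¹ := by rw [div_pow, div_eq_mul_inv]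

theorem tendsto_multiplesDensity [Nonempty ι] (d : ℕ) :
    Tendsto (multiplesDensity ι d) atTop (𝓝 ((d : ℝ) ^ Fintype.card ι)⁻¹) := by
  have horigin : Tendsto (fun p : ℕ => 1 / (2 * p + 1 : ℝ)) atTop (𝓝 0) := by
    -- The case `d = 0`, where `p / 0 = 0` and `(0 : ℝ)⁻¹ = 0`.
    simpa using tendsto_two_mul_div_add_one_div 0
  have hdiff := ((tendsto_two_mul_div_add_one_div d).pow (Fintype.card ι)).sub
    (horigin.pow (Fintype.card ι))
  rw [zero_pow Fintype.card_ne_zero, sub_zero, inv_pow] at hdiff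
  exact hdiff.congr fun p => (multiplesDensity_eq ι d p).symm

theorem boxMean_congr [AddCommMonoid E] [Module ℝ E] {p : ℕ} {f g : (ι → ℤ) → E}
    (h : ∀ t ≠ 0, f t = g t) : boxMean p f = boxMean p g :=
  congrArg (_ • ·) (sum_congr rfl fun t ht => h t (ne_zero_of_mem_puncturedBox ht))

theorem boxMean_sum_divisors_gcd [AddCommMonoid E] [Module ℝ E] [TopologicalSpace E] [T2Space E]
    [ContinuousAdd E] [ContinuousConstSMul ℝ E] (g : ℕ → E) (p : ℕ) :
    boxMean p (fun t : ι → ℤ => ∑ d ∈ (univ.gcd t).natAbs.divisors, g d) =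
      ∑' d, multiplesDensity ι d p • g d := by
  have hasSum_divisors : ∀ t ∈ puncturedBox ι p,
      HasSum (fun d : ℕ => if ∀ i, (d : ℤ) ∣ t i then g d else 0)
        (∑ d ∈ (univ.gcd t).natAbs.divisors, g d) := fun t ht => by
    simp only [← mem_divisors_natAbs_univ_gcd (ne_zero_of_mem_puncturedBox ht)]
    rw [← sum_congr rfl fun d hd => if_pos hd]
    exact hasSum_sum_of_ne_finset_zero fun d hd => if_neg hd
  have swap := ((hasSum_sum hasSum_divisors).const_smul
    ((2 * p + 1 : ℝ) ^ Fintype.card ι)⁻¹).tsum_eq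
  rw [boxMean, ← swap]
  refine tsum_congr fun d => ?_
  rw [← sum_filter, sum_const, ← Nat.cast_smul_eq_nsmul ℝ, smul_smul, multiplesDensity,
    div_eq_inv_mul]

theorem tendsto_boxMean_sum_divisors_gcd [Nonempty ι] [NormedAddCommGroup E] [NormedSpace ℝ E]
    [CompleteSpace E] {g : ℕ → E}
    (hg : Summable fun d : ℕ => ((d : ℝ) ^ Fintype.card ι)⁻¹ * ‖g d‖) :
    Tendsto (fun p => boxMean p fun t : ι → ℤ => ∑ d ∈ (univ.gcd t).natAbs.divisors, g d) atTop
      (𝓝 (∑' d : ℕ, ((d : ℝ) ^ Fintype.card ι)⁻¹ • g d)) := by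
  simp only [boxMean_sum_divisors_gcd]
  refine tendsto_tsum_of_dominated_convergence (hg.mul_left (2 ^ Fintype.card ι))
    (fun d => (tendsto_multiplesDensity d).smul_const (g d)) (.of_forall fun p d => ?_)
  rw [norm_smul, Real.norm_of_nonneg (multiplesDensity_nonneg d p), ← mul_assoc]
  gcongr
  exact multiplesDensity_le d p

end BoxMean

theorem sum_divisors_moebius_convolution {R : Type*} [Ring R] (f : ℕ → R) {m : ℕ} (hm : m ≠ 0) :
    ∑ d ∈ m.divisors, ((fun k => (μ k : R)) ⍟ f) d = f m :=
  ArithmeticFunction.sum_eq_iff_sum_mul_moebius_eq.2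
    (fun k _ => by rw [LSeries.convolution_def]) m (Nat.pos_of_ne_zero hm)

theorem LSeriesHasSum_moebius {w : ℂ} (hw : 1 < w.re) : LSeriesHasSum ↗μ w (riemannZeta w)⁻¹ := by
  have zeta_mul_moebius := ArithmeticFunction.LSeries_zeta_mul_Lseries_moebius hw
  rw [ArithmeticFunction.LSeries_zeta_eq_riemannZeta hw] at zeta_mul_moebius
  rw [← eq_inv_of_mul_eq_one_right zeta_mul_moebius]
  exact (ArithmeticFunction.LSeriesSummable_moebius_iff.2 hw).LSeriesHasSum

theorem tendsto_boxMean_gcd {ι : Type*} [Fintype ι] [DecidableEq ι] (hι : 1 < Fintype.card ι)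
    {f : ℕ → ℂ} {a : ℂ} (hf : LSeriesHasSum f (Fintype.card ι) a) :
    Tendsto (fun p => boxMean p fun t : ι → ℤ => f (univ.gcd t).natAbs) atTop
      (𝓝 (a / riemannZeta (Fintype.card ι))) := by
  have : Nonempty ι := Fintype.card_pos_iff.1 (zero_lt_one.trans hι)
  have hconv : LSeriesHasSum (↗μ ⍟ f) (Fintype.card ι) (a / riemannZeta (Fintype.card ι)) := by
    rw [div_eq_inv_mul]
    exact (LSeriesHasSum_moebius (by simpa using hι)).convolution hf
  have term_eq (d : ℕ) : LSeries.term (↗μ ⍟ f) (Fintype.card ι) d =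
      ((d : ℝ) ^ Fintype.card ι)⁻¹ • (↗μ ⍟ f) d := by
    rw [LSeries.term_of_ne_zero' (by simp), Complex.cpow_natCast, div_eq_inv_mul,
      Complex.real_smul]
    push_cast
    rfl
  rw [LSeriesHasSum, funext term_eq] at hconv
  have hsummable := hconv.summable.norm
  simp only [norm_smul, norm_inv, norm_pow, Real.norm_natCast] at hsummable
  rw [← hconv.tsum_eq]
  refine (tendsto_boxMean_sum_divisors_gcd hsummable).congr fun p => ?_
  exact boxMean_congr fun t ht => sum_divisors_moebius_convolution f
    (Int.natAbs_ne_zero.2 (univ_gcd_ne_zero ht))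

theorem LSeriesHasSum_natCast_cpow {s w : ℂ} (h : 1 < (w - s).re) :
    LSeriesHasSum (fun m : ℕ => (m : ℂ) ^ s) w (riemannZeta (w - s)) := by
  have term_shift : LSeries.term (fun m : ℕ => (m : ℂ) ^ s) w = LSeries.term 1 (w - s) := by
    ext m
    rcases eq_or_ne m 0 with rfl | hm
    · simp
    · have hm' : (m : ℂ) ≠ 0 := Nat.cast_ne_zero.2 hm
      rw [LSeries.term_of_ne_zero hm, LSeries.term_of_ne_zero hm, Complex.cpow_sub _ _ hm',
        Pi.one_apply, one_div_div]
  rw [LSeriesHasSum, term_shift]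
  exact LSeriesHasSum_one h

theorem expected_image_density_free_to_int_general {ι : Type*} [Fintype ι] [DecidableEq ι]
    (hι : 1 < Fintype.card ι) {s : ℂ} (hs : 1 < (Fintype.card ι - s).re) :
    Tendsto (fun p => boxMean p fun t : ι → ℤ => ((univ.gcd t : ℤ) : ℂ) ^ s) atTop
      (𝓝 (riemannZeta (Fintype.card ι - s) / riemannZeta (Fintype.card ι))) := by
  simpa only [natCast_natAbs_finset_gcd] using
    tendsto_boxMean_gcd hι (LSeriesHasSum_natCast_cpow hs)

/-- For `n > 1`,
`lim_{p→∞} (2p+1)^{-n} Σ_{t ∈ ([-p,p] ∩ ℤ)^n, t ≠ 0} 1/gcd(t) = ζ(n+1)/ζ(n)`: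
the expected value of the density of the image of a random homomorphism from the free
group of rank `n` to `ℤ` equals `ζ(n+1)/ζ(n)`. -/
theorem expected_image_density_free_to_int {n : ℕ} (hn : 1 < n) :
    Filter.Tendsto (fun p : ℕ =>
      (1 / (2 * (p : ℂ) + 1) ^ n) *
        ∑ t ∈ (Fintype.piFinset fun _ : Fin n => Finset.Icc (-(p : ℤ)) p).filter
            (fun t => t ≠ 0),
          (1 / ((Finset.univ.gcd t : ℤ) : ℂ)))
      Filter.atTop (nhds (riemannZeta (n + 1) / riemannZeta n)) := by
  simpa [boxMean, puncturedBox, Complex.cpow_neg_one, Complex.real_smul] using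
    expected_image_density_free_to_int_general (ι := Fin n) (s := -1) (by simpa using hn)
      (by simpa using zero_lt_one.trans hn)
end

section
/- Let G be the free group on generators a_1,…,a_m (m ≥ 1) and let H be a free group of rank n > 1. Then the expected density of the image of a random homomorphism is 0: lim_{p→∞} (1/|H_p|^m) · Σ_{φ ∈ (H_p)^m} \overline{D}(φ(G)) = 0, where the sum is over all homomorphisms φ : G → H identified with m-tuples of elements of H_p, and \overline{D}(φ(G)) is the upper asymptotic density of the image subgroup φ(G) in H. -/
/-- The number of elements of the free group of rank `n` of word length at most `p`,
i.e. `|H_p|`. -/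
noncomputable def ballCount (n p : ℕ) : ℕ :=
  Nat.card {w : FreeGroup (Fin n) // FreeGroup.norm w ≤ p}

/-- The upper asymptotic density `\overline{D}(S) = limsup_p |S ∩ H_p| / |H_p|` of a
subset `S` of the free group of rank `n`. -/
noncomputable def upperDensity {n : ℕ} (S : Set (FreeGroup (Fin n))) : ℝ :=
  Filter.limsup (fun p : ℕ =>
    (Nat.card {w : FreeGroup (Fin n) // w ∈ S ∧ FreeGroup.norm w ≤ p} : ℝ) /
      (ballCount n p : ℝ)) Filter.atTop

/-!
Put `p = q + s` with `s` about `p / 4`. A tuple in which some entry is shorter than about `p - s`,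
or in which the images of two distinct letters (generators or their inverses) start with the same
`s` letters, can be encoded by replacing one entry by an element of `H_q`. Balls grow at least by a
factor `2` per unit of radius, so such tuples have proportion `O(2^{-s})`.

For every other tuple at most `s` letters cancel between consecutive letter images in the image of
a reduced word, so `|φ(g)| ≥ C |g|` where `C` is any constant with `3 s + C ≤ p + 1`. Hence
`|φ(G) ∩ H_r| ≤ |G_{r/C}| ≤ (2m + 1)^{r/C}`, which is negligible against `|H_r| ≥ 2^r` once
`2m + 1 < 2^C`, and the image has density `0`. Since densities are at most `1`, the expected density
is at most the proportion of exceptional tuples.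
-/

section

open FreeGroup Finset Filter Topology

section Words

variable {α : Type*}

theorem exists_eq_append_of_head_disjoint (L M : List α) :
    ∃ P L' M', L = P ++ L' ∧ M = P ++ M' ∧ ∀ a ∈ L'.head?, a ∉ M'.head? := by
  induction L generalizing M with
  | nil => exact ⟨[], [], M, rfl, rfl, by simp⟩
  | cons a L ih =>
    cases M with
    | nil => exact ⟨[], a :: L, [], rfl, rfl, by simp⟩
    | cons b M =>
      by_cases hab : a = b
      · obtain ⟨P, L', M', hL, hM, hdisj⟩ := ih M
        exact ⟨b :: P, L', M', by simp [hab, hL], by simp [hM], hdisj⟩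
      · exact ⟨[], a :: L, b :: M, rfl, rfl, by simpa using Ne.symm hab⟩

theorem exists_forall_isReduced_cons [Nontrivial α] {L : List (α × Bool)} (hL : IsReduced L) :
    ∃ a, ∀ b, IsReduced ((a, b) :: L) := by
  cases L with
  | nil => exact ⟨Classical.arbitrary α, fun b => .singleton⟩
  | cons c L =>
    obtain ⟨a, ha⟩ := exists_ne c.1
    exact ⟨a, fun b => List.isChain_cons_cons.2 ⟨fun h => absurd h ha, hL⟩⟩

theorem isReduced_invRev_append {L M : List (α × Bool)} (hL : IsReduced L) (hM : IsReduced M)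
    (hdisj : ∀ a ∈ L.head?, a ∉ M.head?) : IsReduced (invRev L ++ M) := by
  have hinv : IsReduced (invRev L) := by
    classical
    rw [isReduced_iff_reduce_eq, reduce_invRev, hL.reduce_eq]
  refine List.isChain_append.2 ⟨hinv, hM, ?_⟩
  cases L with
  | nil => simp
  | cons a L =>
    rintro x hx y hy hxy
    obtain rfl : (a.1, !a.2) = x := by simpa [invRev] using hx
    have hne : a ≠ y := fun h => hdisj a rfl (h ▸ hy)
    exact Bool.not_eq_eq_eq_not.2 (Bool.eq_not.2 fun h => hne (Prod.ext hxy h))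

theorem norm_mk_of_isReduced [DecidableEq α] {L : List (α × Bool)} (hL : IsReduced L) :
    (mk L).norm = L.length := by
  rw [FreeGroup.norm, toWord_mk, hL.reduce_eq]

end Words

section InitialPart

variable {α : Type*} [DecidableEq α]

/-- The element represented by the first `s` letters of the reduced word of `g`; it is `g` itself
when `g` has fewer than `s` letters. -/
def initialPart (s : ℕ) (g : FreeGroup α) : FreeGroup α := mk (g.toWord.take s)

theorem norm_initialPart_le (s : ℕ) (g : FreeGroup α) : (initialPart s g).norm ≤ s :=
  norm_mk_le.trans (List.length_take_le s _)

theorem norm_initialPart_inv_mul_le (s : ℕ) (g : FreeGroup α) :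
    ((initialPart s g)⁻¹ * g).norm ≤ g.norm - s := by
  have hdrop : (initialPart s g)⁻¹ * g = mk (g.toWord.drop s) := by
    rw [inv_mul_eq_iff_eq_mul, initialPart, mul_mk, List.take_append_drop, mk_toWord]
  rw [hdrop]
  exact norm_mk_le.trans (List.length_drop ..).le

-- The hypothesis says that the Gromov product of `g` and `h` in the Cayley tree is at least `s`.
theorem initialPart_eq_of_norm_inv_mul_le {s : ℕ} {g h : FreeGroup α}
    (H : (g⁻¹ * h).norm + 2 * s ≤ g.norm + h.norm) : initialPart s g = initialPart s h := by
  obtain ⟨P, L, M, hg, hh, hdisj⟩ := exists_eq_append_of_head_disjoint g.toWord h.toWord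
  have hL : IsReduced L := (List.isChain_append.1 (hg ▸ isReduced_toWord)).2.1
  have hM : IsReduced M := (List.isChain_append.1 (hh ▸ isReduced_toWord)).2.1
  have hgh : g⁻¹ * h = mk (invRev L ++ M) := by
    rw [← mk_toWord (x := g), ← mk_toWord (x := h), hg, hh, ← mul_mk, ← mul_mk, ← mul_mk, ← inv_mk]
    group
  have hs : s ≤ P.length := by
    rw [hgh, norm_mk_of_isReduced (isReduced_invRev_append hL hM hdisj), FreeGroup.norm,
      FreeGroup.norm, hg, hh] at H
    simp only [List.length_append, invRev_length] at H
    omega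
  rw [initialPart, initialPart, hg, hh, List.take_append_of_le_length hs,
    List.take_append_of_le_length hs]

theorem norm_mul_initialPart_le {s : ℕ} {g : FreeGroup α}
    (h : initialPart s g = initialPart s g⁻¹) : (g * initialPart s g).norm ≤ g.norm - s := by
  simpa [h, ← norm_inv_eq (x := g * _)] using norm_initialPart_inv_mul_le s g⁻¹

theorem initialPart_mul_initialPart {s : ℕ} {g : FreeGroup α} (hs : 2 * s ≤ g.norm) :
    initialPart s (g * initialPart s g) = initialPart s g := by
  apply initialPart_eq_of_norm_inv_mul_le
  have hquot : (g * initialPart s g)⁻¹ * g = (initialPart s g)⁻¹ := by group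
  have htri := norm_mul_le (g * initialPart s g) (initialPart s g)⁻¹
  have hle := norm_initialPart_le s g
  rw [mul_inv_cancel_right, norm_inv_eq] at htri
  rw [hquot, norm_inv_eq]
  omega

end InitialPart

section LetterImage

variable {G ι : Type*} [Group G]

/-- The image of the letter `x` (a generator or the inverse of one) under the homomorphism
`FreeGroup ι →* G` determined by the tuple `f`. -/
def letterImage (f : ι → G) (x : ι × Bool) : G := FreeGroup.lift f (mk [x])

@[simp]
theorem letterImage_true (f : ι → G) (i : ι) : letterImage f (i, true) = f i := by
  simp [letterImage]

@[simp]
theorem letterImage_false (f : ι → G) (i : ι) : letterImage f (i, false) = (f i)⁻¹ := by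
  simp [letterImage]

theorem letterImage_not (f : ι → G) (x : ι × Bool) :
    letterImage f (x.1, !x.2) = (letterImage f x)⁻¹ := by
  rcases x with ⟨i, _ | _⟩ <;> simp

theorem letterImage_eq_letterImage_iff {f g : ι → G} {x : ι × Bool} :
    letterImage f x = letterImage g x ↔ f x.1 = g x.1 := by
  rcases x with ⟨i, _ | _⟩ <;> simp

theorem norm_letterImage {α : Type*} [DecidableEq α] (f : ι → FreeGroup α) (x : ι × Bool) :
    (letterImage f x).norm = (f x.1).norm := by
  rcases x with ⟨i, _ | _⟩ <;> simp

theorem lift_mk_cons (f : ι → G) (x : ι × Bool) (L : List (ι × Bool)) :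
    FreeGroup.lift f (mk (x :: L)) = letterImage f x * FreeGroup.lift f (mk L) := by
  rw [letterImage, ← _root_.map_mul, mul_mk, List.singleton_append]

end LetterImage

section SmallCancellation

variable {α ι : Type*} [DecidableEq α]

/-- A small cancellation condition on the tuple `f`: the images of distinct letters differ within
their first `s` letters, and each `f i` is long enough for at least `C` letters to survive
cancellation of `s` letters at both ends. -/
structure HasSmallCancellation (s C : ℕ) (f : ι → FreeGroup α) : Prop where
  le_norm (i : ι) : 2 * s + C ≤ (f i).norm
  injective : Function.Injective fun x => initialPart s (letterImage f x)

namespace HasSmallCancellation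

variable {s C : ℕ} {f : ι → FreeGroup α}

theorem norm_add_norm_lt_norm_letterImage_mul (hf : HasSmallCancellation s C f) {x y : ι × Bool}
    (hxy : (x.1, !x.2) ≠ y) {v : FreeGroup α}
    (hv : initialPart s v = initialPart s (letterImage f y)) :
    (letterImage f x).norm + v.norm < (letterImage f x * v).norm + 2 * s := by
  by_contra! hle
  have hpart : initialPart s (letterImage f (x.1, !x.2)) = initialPart s v := by
    apply initialPart_eq_of_norm_inv_mul_le
    rwa [letterImage_not, inv_inv, norm_inv_eq]
  exact hxy (hf.injective (hpart.trans hv))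

theorem mul_length_le_norm_lift_cons (hf : HasSmallCancellation s C f) (x : ι × Bool)
    (L : List (ι × Bool)) (hL : IsReduced (x :: L)) :
    C * (x :: L).length ≤ (FreeGroup.lift f (FreeGroup.mk (x :: L))).norm ∧
      initialPart s (FreeGroup.lift f (FreeGroup.mk (x :: L))) =
        initialPart s (letterImage f x) := by
  have hx : 2 * s + C ≤ (letterImage f x).norm := norm_letterImage f x ▸ hf.le_norm x.1
  induction L generalizing x with
  | nil => exact ⟨by simpa [letterImage] using (Nat.le_add_left _ _).trans hx, rfl⟩
  | cons y L ih =>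
    obtain ⟨hstep, hyL⟩ := List.isChain_cons_cons.1 hL
    obtain ⟨hlen, hpart⟩ := ih y hyL (norm_letterImage f y ▸ hf.le_norm y.1)
    have hxy : (x.1, !x.2) ≠ y := by
      rintro rfl
      simp at hstep
    rw [lift_mk_cons]
    set v := FreeGroup.lift f (FreeGroup.mk (y :: L))
    have hgrow := hf.norm_add_norm_lt_norm_letterImage_mul hxy hpart
    refine ⟨?_, (initialPart_eq_of_norm_inv_mul_le ?_).symm⟩
    · rw [List.length_cons, mul_add_one]
      omega
    · rw [inv_mul_cancel_left]
      omega

theorem mul_norm_le_norm_lift [DecidableEq ι] (hf : HasSmallCancellation s C f)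
    (g : FreeGroup ι) : C * g.norm ≤ (FreeGroup.lift f g).norm := by
  have hred : IsReduced g.toWord := isReduced_toWord
  rw [FreeGroup.norm]
  nth_rw 2 [← mk_toWord (x := g)]
  cases hg : g.toWord with
  | nil => simp
  | cons x L => exact (hf.mul_length_le_norm_lift_cons x L (hg ▸ hred)).1

end HasSmallCancellation

end SmallCancellation

section Ball

variable (α : Type*) [DecidableEq α]

theorem finite_setOf_norm_le [Finite α] (p : ℕ) : {w : FreeGroup α | w.norm ≤ p}.Finite :=
  (List.finite_length_le (α × Bool) p).preimage toWord_injective.injOn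

/-- The set `H_p` of elements of word length at most `p` in the free group on `α`. -/
noncomputable def normBall [Finite α] (p : ℕ) : Finset (FreeGroup α) :=
  (finite_setOf_norm_le α p).toFinset

variable {α}

@[simp]
theorem mem_normBall [Finite α] {p : ℕ} {w : FreeGroup α} : w ∈ normBall α p ↔ w.norm ≤ p := by
  simp [normBall]

variable (α)

theorem card_normBall_zero [Finite α] : #(normBall α 0) = 1 :=
  card_eq_one.2 ⟨1, by ext w; simp⟩

theorem card_normBall_le [Fintype α] (p : ℕ) : #(normBall α p) ≤ (2 * Fintype.card α + 1) ^ p := by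
  have hinj : Set.InjOn (fun (w : FreeGroup α) (i : Fin p) => w.toWord[i.1]?) (normBall α p) := by
    intro v hv w hw h
    refine toWord_injective (List.ext_getElem? fun i => ?_)
    rcases lt_or_ge i p with hi | hi
    · exact congrFun h ⟨i, hi⟩
    · rw [List.getElem?_eq_none ((mem_normBall.1 hv).trans hi),
        List.getElem?_eq_none ((mem_normBall.1 hw).trans hi)]
  calc #(normBall α p) ≤ #(univ : Finset (Fin p → Option (α × Bool))) :=
        card_le_card_of_injOn _ (fun _ _ => mem_univ _) hinj
    _ = (2 * Fintype.card α + 1) ^ p := by simp [mul_comm]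

variable [Finite α] [Nontrivial α]

theorem two_mul_card_normBall_le (p : ℕ) :
    2 * #(normBall α p) ≤ #(normBall α (p + 1)) := by
  choose a ha using fun w : FreeGroup α => exists_forall_isReduced_cons (isReduced_toWord (x := w))
  let prepend (x : Bool × FreeGroup α) : FreeGroup α := mk ((a x.2, x.1) :: x.2.toWord)
  have htoWord (x) : (prepend x).toWord = (a x.2, x.1) :: x.2.toWord := by
    rw [toWord_mk, (ha x.2 x.1).reduce_eq]
  have hcard : #((univ : Finset Bool) ×ˢ normBall α p) ≤ #(normBall α (p + 1)) := by
    refine card_le_card_of_injOn prepend (fun x hx => ?_) fun x _ y _ hxy => ?_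
    · have hx : x.2.toWord.length ≤ p := mem_normBall.1 (mem_product.1 hx).2
      simpa [FreeGroup.norm, htoWord] using hx
    · have hword := congrArg toWord hxy
      rw [htoWord, htoWord, List.cons.injEq] at hword
      exact Prod.ext (Prod.ext_iff.1 hword.1).2 (toWord_injective hword.2)
  simpa using hcard

theorem two_pow_mul_card_normBall_le (q s : ℕ) :
    2 ^ s * #(normBall α q) ≤ #(normBall α (q + s)) := by
  induction s with
  | zero => simp
  | succ s ih =>
    calc 2 ^ (s + 1) * #(normBall α q) = 2 * (2 ^ s * #(normBall α q)) := by ring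
      _ ≤ 2 * #(normBall α (q + s)) := by gcongr
      _ ≤ #(normBall α (q + (s + 1))) := two_mul_card_normBall_le α (q + s)

theorem two_pow_le_card_normBall (p : ℕ) : 2 ^ p ≤ #(normBall α p) := by
  simpa [card_normBall_zero] using two_pow_mul_card_normBall_le α 0 p

end Ball

section Counting

variable {α ι : Type*} [DecidableEq α] [Finite α] [Fintype ι] [DecidableEq ι]

variable (α ι) in
/-- The set `(H_p)^m` of tuples of elements of word length at most `p`, with the index set of
size `m` replaced by an arbitrary finite type. -/
noncomputable def tupleBall (p : ℕ) : Finset (ι → FreeGroup α) :=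
  Fintype.piFinset fun _ => normBall α p

theorem mem_tupleBall {p : ℕ} {f : ι → FreeGroup α} :
    f ∈ tupleBall α ι p ↔ ∀ i, (f i).norm ≤ p := by
  simp [tupleBall]

theorem tsum_subtype_norm_le {M : Type*} [AddCommMonoid M] [TopologicalSpace M]
    (F : (ι → FreeGroup α) → M) (p : ℕ) :
    ∑' f : {f : ι → FreeGroup α // ∀ i, (f i).norm ≤ p}, F f = ∑ f ∈ tupleBall α ι p, F f := by
  rw [← Finset.tsum_subtype]
  exact (Equiv.subtypeEquivRight fun _ => mem_tupleBall.symm).tsum_eq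
    (fun f : tupleBall α ι p => F f)

theorem two_pow_mul_card_piFinset_update_le [Nontrivial α] (q s : ℕ) (i : ι) :
    2 ^ s * #(Fintype.piFinset
        (Function.update (fun _ : ι => normBall α (q + s)) i (normBall α q))) ≤
      #(normBall α (q + s)) ^ Fintype.card ι := by
  have hother : ∏ j ∈ univ.erase i,
      #(Function.update (fun _ : ι => normBall α (q + s)) i (normBall α q) j) =
        ∏ _j ∈ univ.erase i, #(normBall α (q + s)) :=
    prod_congr rfl fun j hj => by rw [Function.update_of_ne (ne_of_mem_erase hj)]
  rw [Fintype.card_piFinset, ← mul_prod_erase _ _ (mem_univ i), hother, Function.update_self,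
    ← mul_assoc]
  calc 2 ^ s * #(normBall α q) * ∏ _j ∈ univ.erase i, #(normBall α (q + s))
      ≤ #(normBall α (q + s)) * ∏ _j ∈ univ.erase i, #(normBall α (q + s)) := by
        gcongr
        exact two_pow_mul_card_normBall_le α q s
    _ = #(normBall α (q + s)) ^ Fintype.card ι := by
        rw [mul_prod_erase _ (fun _ => #(normBall α (q + s))) (mem_univ i), prod_const, card_univ]

theorem two_pow_mul_card_le_of_encoding [Nontrivial α] {q s : ℕ} {S : Finset (ι → FreeGroup α)}
    (hS : S ⊆ tupleBall α ι (q + s)) (i : ι) (encode : (ι → FreeGroup α) → FreeGroup α)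
    (hencode : ∀ f ∈ S, (encode f).norm ≤ q)
    (hdecode : ∀ f ∈ S, ∀ g ∈ S, (∀ j, j ≠ i → f j = g j) → encode f = encode g → f i = g i) :
    2 ^ s * #S ≤ #(normBall α (q + s)) ^ Fintype.card ι := by
  have hinj : Set.InjOn (fun f => Function.update f i (encode f)) S := by
    intro f hf g hg hfg
    have hother (j) (hj : j ≠ i) : f j = g j := by simpa [hj] using congrFun hfg j
    have hi : encode f = encode g := by simpa using congrFun hfg i
    funext j
    by_cases hj : j = i
    · exact hj ▸ hdecode f hf g hg hother hi
    · exact hother j hj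
  have hcard : #S ≤ #(Fintype.piFinset
      (Function.update (fun _ : ι => normBall α (q + s)) i (normBall α q))) := by
    refine card_le_card_of_injOn _ (fun f hf => Fintype.mem_piFinset.2 fun j => ?_) hinj
    by_cases hj : j = i
    · subst hj
      simpa using hencode f hf
    · simpa [hj] using mem_tupleBall.1 (hS hf) j
  exact (Nat.mul_le_mul_left _ hcard).trans (two_pow_mul_card_piFinset_update_le q s i)

variable [Nontrivial α]

theorem two_pow_mul_card_short_le (q s : ℕ) (i : ι) :
    2 ^ s * #{f ∈ tupleBall α ι (q + s) | (f i).norm ≤ q} ≤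
      #(normBall α (q + s)) ^ Fintype.card ι :=
  two_pow_mul_card_le_of_encoding (filter_subset _ _) i (fun f => f i)
    (fun _ hf => (mem_filter.1 hf).2) fun _ _ _ _ _ h => h

-- `f i` begins with `u` and ends with `u⁻¹`, so it is recovered from the shorter `f i * u`, whose
-- first `s` letters still spell `u`.
theorem two_pow_mul_card_self_overlap_le (q s : ℕ) (i : ι) :
    2 ^ s * #{f ∈ tupleBall α ι (q + s) |
      2 * s ≤ (f i).norm ∧ initialPart s (f i) = initialPart s (f i)⁻¹} ≤
      #(normBall α (q + s)) ^ Fintype.card ι := by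
  refine two_pow_mul_card_le_of_encoding (filter_subset _ _) i
    (fun f => f i * initialPart s (f i)) (fun f hf => ?_) fun f hf g hg _ h => ?_
  · obtain ⟨hball, -, hpart⟩ := mem_filter.1 hf
    exact (norm_mul_initialPart_le hpart).trans (Nat.sub_le_of_le_add (mem_tupleBall.1 hball i))
  · have hpart : initialPart s (f i) = initialPart s (g i) := by
      rw [← initialPart_mul_initialPart (mem_filter.1 hf).2.1, h,
        initialPart_mul_initialPart (mem_filter.1 hg).2.1]
    exact mul_right_cancel (hpart ▸ h)

theorem two_pow_mul_card_overlap_le (q s : ℕ) {x y : ι × Bool} (hxy : x.1 ≠ y.1) :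
    2 ^ s * #{f ∈ tupleBall α ι (q + s) |
      initialPart s (letterImage f x) = initialPart s (letterImage f y)} ≤
      #(normBall α (q + s)) ^ Fintype.card ι := by
  refine two_pow_mul_card_le_of_encoding (filter_subset _ _) x.1
    (fun f => (initialPart s (letterImage f y))⁻¹ * letterImage f x)
    (fun f hf => ?_) fun f _ g _ hfg h => ?_
  · obtain ⟨hball, hpart⟩ := mem_filter.1 hf
    have hx : (letterImage f x).norm ≤ q + s :=
      norm_letterImage f x ▸ mem_tupleBall.1 hball x.1
    exact hpart ▸ (norm_initialPart_inv_mul_le s _).trans (Nat.sub_le_of_le_add hx)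
  · rw [letterImage_eq_letterImage_iff.2 (hfg y.1 hxy.symm)] at h
    exact letterImage_eq_letterImage_iff.1 (mul_left_cancel h)

theorem two_pow_mul_card_collision_le (q s : ℕ) {x y : ι × Bool} (hxy : x ≠ y) :
    2 ^ s * #{f ∈ tupleBall α ι (q + s) | 2 * s ≤ (f x.1).norm ∧
      initialPart s (letterImage f x) = initialPart s (letterImage f y)} ≤
      #(normBall α (q + s)) ^ Fintype.card ι := by
  by_cases hfst : x.1 = y.1
  · obtain rfl : y = (x.1, !x.2) := Prod.ext hfst.symm
      (Bool.eq_not.2 fun h => hxy (Prod.ext hfst h.symm))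
    have hself (f : ι → FreeGroup α) :
        initialPart s (letterImage f x) = initialPart s (letterImage f (x.1, !x.2)) ↔
          initialPart s (f x.1) = initialPart s (f x.1)⁻¹ := by
      rcases x with ⟨i, _ | _⟩
      · simpa using eq_comm
      · simp
    simpa only [hself] using two_pow_mul_card_self_overlap_le (α := α) q s x.1
  · refine le_trans ?_ (two_pow_mul_card_overlap_le q s hfst)
    gcongr
    exact fun h => h.2

theorem mul_card_biUnion_le {β γ : Type*} [DecidableEq γ] {c N : ℕ} {s : Finset β}
    {t : β → Finset γ} (h : ∀ b ∈ s, c * #(t b) ≤ N) : c * #(s.biUnion t) ≤ #s * N := by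
  calc c * #(s.biUnion t) ≤ c * ∑ b ∈ s, #(t b) := by gcongr; exact card_biUnion_le
    _ = ∑ b ∈ s, c * #(t b) := mul_sum ..
    _ ≤ #s * N := sum_le_card_nsmul s _ N h

open Classical in
theorem two_pow_mul_card_not_hasSmallCancellation_le {q s C : ℕ} (hq : 2 * s + C ≤ q + 1) :
    2 ^ s * #{f ∈ tupleBall α ι (q + s) | ¬ HasSmallCancellation s C f} ≤
      (Fintype.card ι + (2 * Fintype.card ι) ^ 2) *
        #(normBall α (q + s)) ^ Fintype.card ι := by
  let short (i : ι) := {f ∈ tupleBall α ι (q + s) | (f i).norm ≤ q}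
  let collision (z : (ι × Bool) × (ι × Bool)) := {f ∈ tupleBall α ι (q + s) |
    2 * s ≤ (f z.1.1).norm ∧ initialPart s (letterImage f z.1) = initialPart s (letterImage f z.2)}
  have hcover : {f ∈ tupleBall α ι (q + s) | ¬ HasSmallCancellation s C f} ⊆
      univ.biUnion short ∪ univ.offDiag.biUnion collision := by
    intro f hf
    obtain ⟨hball, hbad⟩ := mem_filter.1 hf
    by_contra hgood
    simp only [short, collision, mem_union, mem_biUnion, mem_filter, mem_offDiag, mem_univ,
      hball, true_and, not_or, not_exists, not_and, not_le] at hgood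
    obtain ⟨hlong, hdistinct⟩ := hgood
    have hnorm (i) : 2 * s + C ≤ (f i).norm := by
      have := hlong i
      omega
    refine hbad ⟨hnorm, fun x y hxy => ?_⟩
    by_contra hne
    exact hdistinct (x, y) hne (le_of_add_le_left (hnorm x.1)) hxy
  have hpairs : #(univ : Finset (ι × Bool)).offDiag ≤ (2 * Fintype.card ι) ^ 2 := by
    rw [offDiag_card, card_univ, Fintype.card_prod, Fintype.card_bool, mul_comm _ 2, ← sq]
    exact Nat.sub_le _ _
  set N := #(normBall α (q + s)) ^ Fintype.card ι
  calc 2 ^ s * #{f ∈ tupleBall α ι (q + s) | ¬ HasSmallCancellation s C f}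
      ≤ 2 ^ s * (#(univ.biUnion short) + #(univ.offDiag.biUnion collision)) :=
        Nat.mul_le_mul_left _ ((card_le_card hcover).trans (card_union_le _ _))
    _ = 2 ^ s * #(univ.biUnion short) + 2 ^ s * #(univ.offDiag.biUnion collision) := mul_add ..
    _ ≤ #(univ : Finset ι) * N + #(univ : Finset (ι × Bool)).offDiag * N :=
        add_le_add (mul_card_biUnion_le fun i _ => two_pow_mul_card_short_le q s i)
          (mul_card_biUnion_le fun z hz =>
            two_pow_mul_card_collision_le q s (mem_offDiag.1 hz).2.2)
    _ ≤ (Fintype.card ι + (2 * Fintype.card ι) ^ 2) * N := by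
        rw [card_univ, ← add_mul]
        gcongr

end Counting

section Density

theorem card_normBall_eq_ballCount (n p : ℕ) : #(normBall (Fin n) p) = ballCount n p :=
  (Nat.subtype_card _ fun _ => mem_normBall).symm

theorem two_pow_le_ballCount {n : ℕ} (hn : 1 < n) (p : ℕ) : 2 ^ p ≤ ballCount n p := by
  have := Fin.nontrivial_iff_two_le.2 hn
  exact card_normBall_eq_ballCount n p ▸ two_pow_le_card_normBall (Fin n) p

variable {n : ℕ} (S : Set (FreeGroup (Fin n)))

theorem card_inter_ball_le (p : ℕ) :
    Nat.card {w : FreeGroup (Fin n) // w ∈ S ∧ w.norm ≤ p} ≤ ballCount n p :=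
  Nat.card_mono (finite_setOf_norm_le (Fin n) p)
    (s := {w | w ∈ S ∧ FreeGroup.norm w ≤ p}) fun _ hw => hw.2

theorem card_inter_ball_div_le_one (p : ℕ) :
    (Nat.card {w : FreeGroup (Fin n) // w ∈ S ∧ w.norm ≤ p} : ℝ) / ballCount n p ≤ 1 :=
  div_le_one_of_le₀ (mod_cast card_inter_ball_le S p) (by positivity)

theorem upperDensity_le_one : upperDensity S ≤ 1 :=
  limsup_le_of_le (isCoboundedUnder_le_of_le _ (x := 0) fun _ => by positivity)
    (Eventually.of_forall (card_inter_ball_div_le_one S))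

theorem upperDensity_nonneg : 0 ≤ upperDensity S :=
  le_limsup_of_frequently_le (Frequently.of_forall fun _ => by positivity)
    (isBoundedUnder_of ⟨1, card_inter_ball_div_le_one S⟩)

variable {S}

theorem upperDensity_eq_zero_of_card_le_pow {C K : ℕ} (hn : 1 < n) (hK : K < 2 ^ C) (hC : C ≠ 0)
    (hS : ∀ p, Nat.card {w : FreeGroup (Fin n) // w ∈ S ∧ w.norm ≤ p} ≤ K ^ (p / C)) :
    upperDensity S = 0 := by
  have hratio : (K : ℝ) / 2 ^ C < 1 := by
    rw [div_lt_one (by positivity)]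
    exact_mod_cast hK
  have hlim : Tendsto (fun p : ℕ => ((K : ℝ) / 2 ^ C) ^ (p / C)) atTop (𝓝 0) :=
    (tendsto_pow_atTop_nhds_zero_of_lt_one (by positivity) hratio).comp
      (Nat.tendsto_div_const_atTop hC)
  refine (squeeze_zero (fun _ => by positivity) (fun p => ?_) hlim).limsup_eq
  have hball : (2 ^ C) ^ (p / C) ≤ ballCount n p :=
    calc (2 ^ C) ^ (p / C) = 2 ^ (C * (p / C)) := (pow_mul ..).symm
      _ ≤ 2 ^ p := Nat.pow_le_pow_right two_pos (Nat.mul_div_le p C)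
      _ ≤ ballCount n p := two_pow_le_ballCount hn p
  rw [div_pow]
  exact div_le_div₀ (by positivity) (mod_cast hS p) (by positivity) (mod_cast hball)

variable {ι : Type*} [Fintype ι]

theorem upperDensity_range_lift_eq_zero [DecidableEq ι] {C : ℕ} (hn : 1 < n)
    (hC : 2 * Fintype.card ι + 1 < 2 ^ C) {f : ι → FreeGroup (Fin n)}
    (hf : ∀ g, C * g.norm ≤ (FreeGroup.lift f g).norm) :
    upperDensity ((FreeGroup.lift f).range : Set (FreeGroup (Fin n))) = 0 := by
  have hC0 : C ≠ 0 := by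
    rintro rfl
    simp at hC
  refine upperDensity_eq_zero_of_card_le_pow hn hC hC0 fun p => ?_
  have hsub : {w : FreeGroup (Fin n) | w ∈ (FreeGroup.lift f).range ∧ w.norm ≤ p} ⊆
      (normBall ι (p / C)).image (FreeGroup.lift f) := by
    rintro _ ⟨⟨g, rfl⟩, hg⟩
    rw [coe_image]
    refine ⟨g, mem_normBall.2 ((Nat.le_div_iff_mul_le hC0.pos).2 ?_), rfl⟩
    exact mul_comm C _ ▸ (hf g).trans hg
  calc Nat.card {w : FreeGroup (Fin n) // w ∈ (FreeGroup.lift f).range ∧ w.norm ≤ p}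
      ≤ #((normBall ι (p / C)).image (FreeGroup.lift f)) :=
        (Nat.card_mono (finite_toSet _) hsub).trans_eq (Nat.card_eq_finsetCard _)
    _ ≤ #(normBall ι (p / C)) := card_image_le
    _ ≤ (2 * Fintype.card ι + 1) ^ (p / C) := card_normBall_le ι _

open Classical in
theorem sum_upperDensity_range_lift_le {s C : ℕ} (hn : 1 < n)
    (hC : 2 * Fintype.card ι + 1 < 2 ^ C) (T : Finset (ι → FreeGroup (Fin n))) :
    ∑ f ∈ T, upperDensity ((FreeGroup.lift f).range : Set (FreeGroup (Fin n))) ≤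
      #{f ∈ T | ¬ HasSmallCancellation s C f} := by
  rw [← sum_boole]
  refine sum_le_sum fun f _ => ?_
  by_cases hf : HasSmallCancellation s C f
  · simpa [hf] using (upperDensity_range_lift_eq_zero hn hC hf.mul_norm_le_norm_lift).le
  · simpa [hf] using upperDensity_le_one _

theorem average_upperDensity_le {m q s : ℕ} (hn : 1 < n) (hq : 2 * s + (2 * m + 1) ≤ q + 1) :
    (1 / (ballCount n (q + s) : ℝ) ^ m) *
        ∑' f : {f : Fin m → FreeGroup (Fin n) // ∀ i, (f i).norm ≤ q + s},
          upperDensity ((FreeGroup.lift (f : Fin m → FreeGroup (Fin n))).range :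
            Set (FreeGroup (Fin n))) ≤
      (m + (2 * m) ^ 2) * (1 / 2) ^ s := by
  classical
  have := Fin.nontrivial_iff_two_le.2 hn
  have hpos : 0 < ballCount n (q + s) := (Nat.two_pow_pos _).trans_le (two_pow_le_ballCount hn _)
  have hsum := sum_upperDensity_range_lift_le (s := s) (C := 2 * m + 1) hn
    (by simpa using Nat.lt_two_pow_self) (tupleBall (Fin n) (Fin m) (q + s))
  have hcard := two_pow_mul_card_not_hasSmallCancellation_le (α := Fin n) (ι := Fin m) hq
  rw [Fintype.card_fin, card_normBall_eq_ballCount] at hcard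
  have htsum := tsum_subtype_norm_le (fun f : Fin m → FreeGroup (Fin n) =>
    upperDensity ((FreeGroup.lift f).range : Set (FreeGroup (Fin n)))) (q + s)
  rw [htsum, one_div_mul_eq_div, div_le_iff₀ (by positivity), one_div_pow, mul_one_div,
    div_mul_eq_mul_div, le_div_iff₀' (by positivity)]
  calc (2 : ℝ) ^ s * ∑ f ∈ tupleBall (Fin n) (Fin m) (q + s),
        upperDensity ((FreeGroup.lift f).range : Set (FreeGroup (Fin n)))
      ≤ 2 ^ s * #{f ∈ tupleBall (Fin n) (Fin m) (q + s) |
          ¬ HasSmallCancellation s (2 * m + 1) f} := by gcongr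
    _ ≤ (m + (2 * m) ^ 2) * (ballCount n (q + s) : ℝ) ^ m := mod_cast hcard

end Density

end

/-- Let `G` be the free group on `m ≥ 1` generators and `H` the free
group of rank `n > 1`. The expected density of the image of a random homomorphism
`G → H` is `0`: the average over `φ ∈ (H_p)^m` of the upper density of `φ(G)`
tends to `0` as `p → ∞`. -/
theorem expected_image_density_zero {m n : ℕ} (hm : 1 ≤ m) (hn : 1 < n) :
    Filter.Tendsto (fun p : ℕ =>
      (1 / (ballCount n p : ℝ) ^ m) *
        ∑' f : {f : Fin m → FreeGroup (Fin n) // ∀ i, FreeGroup.norm (f i) ≤ p},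
          upperDensity ((FreeGroup.lift (f : Fin m → FreeGroup (Fin n))).range :
            Set (FreeGroup (Fin n))))
      Filter.atTop (nhds 0) := by
  have hpow : Filter.Tendsto (fun p : ℕ => (1 / 2 : ℝ) ^ (p / 4)) Filter.atTop (nhds 0) :=
    (tendsto_pow_atTop_nhds_zero_of_lt_one (by norm_num) one_half_lt_one).comp
      (Nat.tendsto_div_const_atTop four_ne_zero)
  have hlim := hpow.const_mul ((m : ℝ) + (2 * m) ^ 2)
  rw [mul_zero] at hlim
  refine squeeze_zero' (Filter.Eventually.of_forall fun p => ?_) ?_ hlim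
  · exact mul_nonneg (by positivity) (tsum_nonneg fun f => upperDensity_nonneg _)
  · filter_upwards [Filter.eventually_ge_atTop (4 * (2 * m + 1))] with p hp
    obtain ⟨q, hq⟩ := Nat.exists_eq_add_of_le' (Nat.div_le_self p 4)
    have h := average_upperDensity_le (m := m) (q := q) (s := p / 4) hn (by omega)
    rwa [← hq] at h
end

section
/- Let G be the free group on generators a_1,…,a_n and let H be a free group of rank greater than 1. Then for every natural number l ≥ 1, the set of homomorphisms φ : G → H with remnant length at least l, identified with n-tuples in H^n, is generic: its asymptotic density in H^n equals 1. -/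
/-!
Cancelling `k` letters in a product `x * y` forces the first `k` letters of `y` to be the inverse of
the last `k` letters of `x`. If `x` is fixed, or if `x = y` has length at least `2 * k`, then `y` is
recovered from what remains of it after deleting its first `k` letters, a word of length at most
`p - k` when `y` has length at most `p`. Every reduced word can be extended on the left by each
generator, with a suitable sign, so balls grow at least as fast as powers of the rank `r`, and the
proportion of such `y` in the ball of radius `p` is at most `r⁻¹ ^ k`. With `k = p / 4`, a tuple in
which no such cancellation occurs, and whose entries all have length at least `2 * k + l`, has
remnant length at least `l`; the excluded events are boundedly many, each of proportion tending
to `0`.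
-/

open Filter Finset FreeGroup Topology

namespace Remnant

section Proportion

variable {Ω Ω' : Type*} {A : Finset Ω} {P Q : Ω → Prop}

open Classical in
/-- The proportion of the elements of the finite set `A` that satisfy `P`; it is `0` when `A` is
empty. -/
noncomputable def proportion (A : Finset Ω) (P : Ω → Prop) : ℝ :=
  #{x ∈ A | P x} / #A

theorem proportion_eq_card_filter_div [DecidablePred P] :
    proportion A P = #{x ∈ A | P x} / #A := by
  unfold proportion
  congr!

theorem proportion_le_one : proportion A P ≤ 1 := by
  classical
  rw [proportion_eq_card_filter_div]
  exact div_le_one_of_le₀ (mod_cast card_filter_le A P) (Nat.cast_nonneg _)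

theorem proportion_mono (h : ∀ x ∈ A, P x → Q x) : proportion A P ≤ proportion A Q := by
  classical
  simp only [proportion_eq_card_filter_div]
  have hsub : {x ∈ A | P x} ⊆ {x ∈ A | Q x} := fun x hx =>
    mem_filter.2 ⟨(mem_filter.1 hx).1, h x (mem_filter.1 hx).1 (mem_filter.1 hx).2⟩
  gcongr

theorem proportion_or_le : proportion A (fun x => P x ∨ Q x) ≤ proportion A P + proportion A Q := by
  classical
  simp only [proportion_eq_card_filter_div]
  rw [← add_div, filter_or]
  gcongr
  exact_mod_cast card_union_le _ _

theorem proportion_exists_le {κ : Type*} [Fintype κ] {P : κ → Ω → Prop} {ε : ℝ}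
    (h : ∀ q, proportion A (P q) ≤ ε) :
    proportion A (fun x => ∃ q, P q x) ≤ Fintype.card κ * ε := by
  classical
  have hunion : ({x ∈ A | ∃ q, P q x} : Finset Ω) = univ.biUnion fun q => {x ∈ A | P q x} := by
    ext; simp
  calc proportion A (fun x => ∃ q, P q x)
      ≤ ∑ q, proportion A (P q) := by
        simp only [proportion_eq_card_filter_div]
        rw [← sum_div, hunion]
        gcongr
        exact_mod_cast card_biUnion_le
    _ ≤ Fintype.card κ * ε := by
        simpa using sum_le_card_nsmul univ _ ε fun q _ => h q

theorem one_sub_proportion_not (hA : A.Nonempty) :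
    1 - proportion A (fun x => ¬ P x) = proportion A P := by
  classical
  have hA' : (#A : ℝ) ≠ 0 := mod_cast hA.card_ne_zero
  simp only [proportion_eq_card_filter_div]
  rw [sub_eq_iff_eq_add, ← add_div, eq_div_iff hA', one_mul]
  exact_mod_cast (card_filter_add_card_filter_not P).symm

theorem proportion_le_card_div_card_of_injOn {B : Finset Ω'} (f : Ω → Ω')
    (hmaps : ∀ x ∈ A, P x → f x ∈ B) (hinj : Set.InjOn f {x | P x}) :
    proportion A P ≤ #B / #A := by
  classical
  unfold proportion
  gcongr
  refine card_le_card_of_injOn f (fun x hx => ?_) (hinj.mono fun x hx => ?_)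
  · obtain ⟨hxA, hxP⟩ := mem_filter.1 hx
    exact hmaps x hxA hxP
  · exact (mem_filter.1 hx).2

end Proportion

section Pi

variable {ι : Type*} [Fintype ι] [DecidableEq ι] {π : ι → Type*} {A : ∀ i, Finset (π i)}

theorem sum_piFinset_sum_update {M : Type*} [AddCommMonoid M] (i : ι) (F : (∀ i, π i) → M) :
    ∑ f ∈ Fintype.piFinset A, ∑ y ∈ A i, F (Function.update f i y) =
      #(A i) • ∑ f ∈ Fintype.piFinset A, F f := by
  -- `(f, y) ↦ (update f i y, f i)` is an involution of `(∏ i, A i) × A i`.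
  let swap (q : (∀ i, π i) × π i) : (∀ i, π i) × π i := (Function.update q.1 i q.2, q.1 i)
  have swap_mem : ∀ q ∈ Fintype.piFinset A ×ˢ A i, swap q ∈ Fintype.piFinset A ×ˢ A i := by
    rintro ⟨f, y⟩ hq
    obtain ⟨hf, hy⟩ := mem_product.1 hq
    rw [Fintype.mem_piFinset] at hf
    refine mem_product.2 ⟨Fintype.mem_piFinset.2 fun j => ?_, hf i⟩
    rcases eq_or_ne j i with rfl | hj
    · simpa [swap] using hy
    · simpa [swap, hj] using hf j
  have swap_swap : ∀ q, swap (swap q) = q := fun q => by simp [swap]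
  calc ∑ f ∈ Fintype.piFinset A, ∑ y ∈ A i, F (Function.update f i y)
      = ∑ q ∈ Fintype.piFinset A ×ˢ A i, F (swap q).1 :=
        (sum_product _ _ fun q => F (swap q).1).symm
    _ = ∑ q ∈ Fintype.piFinset A ×ˢ A i, F q.1 :=
        sum_nbij' swap swap swap_mem swap_mem (fun q _ => swap_swap q)
          (fun q _ => swap_swap q) fun _ _ => rfl
    _ = #(A i) • ∑ f ∈ Fintype.piFinset A, F f := by
        simp only [sum_product, sum_const, smul_sum]

theorem proportion_piFinset_le {P : (∀ i, π i) → Prop} {ε : ℝ} (hA : ∀ i, (A i).Nonempty) (i : ι)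
    (h : ∀ f ∈ Fintype.piFinset A, proportion (A i) (fun y => P (Function.update f i y)) ≤ ε) :
    proportion (Fintype.piFinset A) P ≤ ε := by
  classical
  have hAi : (0 : ℝ) < #(A i) := mod_cast (hA i).card_pos
  have hpi : (0 : ℝ) < #(Fintype.piFinset A) := mod_cast (Fintype.piFinset_nonempty.2 hA).card_pos
  have hfiber : ∀ f ∈ Fintype.piFinset A,
      (#{y ∈ A i | P (Function.update f i y)} : ℝ) ≤ ε * #(A i) := by
    intro f hf
    rw [← div_le_iff₀ hAi, ← proportion_eq_card_filter_div]
    exact h f hf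
  rw [proportion_eq_card_filter_div, div_le_iff₀ hpi]
  refine le_of_mul_le_mul_left ?_ hAi
  calc (#(A i) * #{f ∈ Fintype.piFinset A | P f} : ℝ)
      = ∑ f ∈ Fintype.piFinset A, (#{y ∈ A i | P (Function.update f i y)} : ℝ) := by
        simp only [card_filter]
        exact_mod_cast (sum_piFinset_sum_update i fun f => if P f then 1 else 0).symm
    _ ≤ ∑ _f ∈ Fintype.piFinset A, ε * #(A i) := sum_le_sum hfiber
    _ = #(A i) * (ε * #(Fintype.piFinset A)) := by
        rw [sum_const, nsmul_eq_mul]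
        ring

end Pi

section Words

variable {α : Type*}

theorem eq_of_fst_eq_of_ne_inv {s t : α × Bool} (h : t ≠ (s.1, !s.2)) (hst : s.1 = t.1) :
    s.2 = t.2 := by
  by_contra hne
  exact h (Prod.ext hst.symm (Bool.eq_not_of_ne (Ne.symm hne)))

theorem exists_append_invRev_append {X Y : List (α × Bool)} (hX : IsReduced X) (hY : IsReduced Y) :
    ∃ A C B, X = A ++ C ∧ Y = invRev C ++ B ∧ IsReduced (A ++ B) := by
  induction X using List.reverseRecOn generalizing Y with
  | nil => exact ⟨[], [], Y, rfl, rfl, hY⟩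
  | append_singleton X s ih =>
    cases Y with
    | nil => exact ⟨X ++ [s], [], [], by simp, by simp, by simpa using hX⟩
    | cons t Y =>
      by_cases hst : t = (s.1, !s.2)
      · obtain ⟨A, C, B, hX', hY', hAB⟩ :=
          ih (Y := Y) (hX.infix ⟨[], [s], by simp⟩) (hY.infix ⟨[t], [], by simp⟩)
        exact ⟨A, C ++ [s], B, by simp [hX'], by simp [hY', hst, invRev], hAB⟩
      · have hsY : IsReduced ([s] ++ t :: Y) :=
          isReduced_cons_cons.2 ⟨eq_of_fst_eq_of_ne_inv hst, hY⟩
        exact ⟨X ++ [s], [], t :: Y, by simp, by simp, hX.append_overlap hsY (by simp)⟩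

theorem exists_isReduced_cons (a : α) {L : List (α × Bool)} (hL : IsReduced L) :
    ∃ e, IsReduced ((a, e) :: L) := by
  cases L with
  | nil => exact ⟨true, by simp⟩
  | cons s L => exact ⟨s.2, isReduced_cons_cons.2 ⟨fun _ => rfl, hL⟩⟩

variable [DecidableEq α] {k : ℕ} {x y : FreeGroup α}

/-- The element whose reduced word is that of `x` without its first `k` letters. -/
def dropLetters (k : ℕ) (x : FreeGroup α) : FreeGroup α :=
  mk (x.toWord.drop k)

theorem toWord_dropLetters : (dropLetters k x).toWord = x.toWord.drop k := by
  rw [dropLetters, toWord_mk]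
  exact (isReduced_toWord.infix (List.drop_suffix k _).isInfix).reduce_eq

theorem norm_dropLetters : (dropLetters k x).norm = x.norm - k := by
  rw [FreeGroup.norm, toWord_dropLetters, List.length_drop, FreeGroup.norm]

theorem injOn_dropLetters (g : List (α × Bool) → List (α × Bool)) :
    Set.InjOn (dropLetters k) {x : FreeGroup α | x.toWord.take k = g (x.toWord.drop k)} := by
  intro x hx y hy hxy
  have hdrop : x.toWord.drop k = y.toWord.drop k := by
    rw [← toWord_dropLetters, hxy, toWord_dropLetters]
  have htake : x.toWord.take k = y.toWord.take k := by
    rw [hx.out, hy.out, hdrop]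
  rw [← toWord_inj, ← List.take_append_drop k x.toWord, htake, hdrop, List.take_append_drop]

end Words

section Cancellation

variable {α : Type} [DecidableEq α] {k : ℕ} {x y : FreeGroup α}

theorem pmPow_injective (b : Bool) : Function.Injective (pmPow b : FreeGroup α → FreeGroup α) := by
  cases b
  · exact inv_injective
  · exact Function.injective_id

theorem norm_pmPow (b : Bool) (x : FreeGroup α) : (pmPow b x).norm = x.norm := by
  cases b
  · exact norm_inv_eq
  · rfl

theorem take_toWord_of_le_cancelLen (h : k ≤ cancelLen x y) :
    y.toWord.take k = x⁻¹.toWord.take k := by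
  obtain ⟨A, C, B, hx, hy, hAB⟩ :=
    exists_append_invRev_append (isReduced_toWord (x := x)) (isReduced_toWord (x := y))
  have hxy : (x * y).toWord = A ++ B := by
    have : x * y = mk (A ++ B) := by
      rw [← mk_toWord (x := x), ← mk_toWord (x := y), hx, hy]
      simp only [← mul_mk, ← inv_mk]
      group
    rw [this, toWord_mk, hAB.reduce_eq]
  have hk : k ≤ (invRev C).length := by
    simp only [cancelLen, FreeGroup.norm, hxy, hx, hy, List.length_append, invRev_length] at h ⊢
    omega
  rw [toWord_inv, hx, hy, invRev_append, List.take_append_of_le_length hk,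
    List.take_append_of_le_length hk]

theorem take_toWord_of_le_cancelLen_self (h : k ≤ cancelLen x x) (hx : 2 * k ≤ x.norm) :
    x.toWord.take k = (invRev (x.toWord.drop k)).take k := by
  have hk : k ≤ (invRev (x.toWord.drop k)).length := by
    rw [FreeGroup.norm] at hx
    rw [invRev_length, List.length_drop]
    omega
  calc x.toWord.take k
      = (invRev (x.toWord.take k ++ x.toWord.drop k)).take k := by
        rw [List.take_append_drop, ← toWord_inv, take_toWord_of_le_cancelLen h]
    _ = (invRev (x.toWord.drop k)).take k := by
        rw [invRev_append, List.take_append_of_le_length hk]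

theorem le_remLen {m l : ℕ} {t : Fin m → FreeGroup α} {i : Fin m}
    (hlen : 2 * k + l ≤ (t i).norm) (hself : cancelLen (t i) (t i) ≤ k)
    (hleft : ∀ j ≠ i, ∀ a, cancelLen (pmPow a (t j)) (t i) ≤ k)
    (hright : ∀ j ≠ i, ∀ a, cancelLen (t i) (pmPow a (t j)) ≤ k) :
    l ≤ remLen t i := by
  have hL : leftCancel t i ≤ k := by
    refine Finset.sup_le fun ⟨j, a⟩ _ => ?_
    rcases eq_or_ne j i with rfl | hj
    · cases a
      · simp
      · simpa [pmPow] using hself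
    · simpa [hj] using hleft j hj a
  have hR : rightCancel t i ≤ k := by
    refine Finset.sup_le fun ⟨j, a⟩ _ => ?_
    rcases eq_or_ne j i with rfl | hj
    · cases a
      · simp
      · simpa [pmPow] using hself
    · simpa [hj] using hright j hj a
  unfold remLen
  omega

end Cancellation

section Balls

theorem finite_setOf_norm_le (α : Type*) [DecidableEq α] [Finite α] (p : ℕ) :
    {w : FreeGroup α | w.norm ≤ p}.Finite :=
  Set.Finite.of_injOn (t := {L : List (α × Bool) | L.length ≤ p}) (fun _ hw => hw)
    toWord_injective.injOn (List.finite_length_le _ _)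

/-- The elements of word length at most `p` in the free group on `α`. -/
noncomputable def normBall (α : Type*) [DecidableEq α] [Finite α] (p : ℕ) : Finset (FreeGroup α) :=
  (finite_setOf_norm_le α p).toFinset

variable {α : Type*} [DecidableEq α] [Finite α] {p q k : ℕ} {w : FreeGroup α}

theorem mem_normBall : w ∈ normBall α p ↔ w.norm ≤ p := by
  simp [normBall]

theorem normBall_nonempty : (normBall α p).Nonempty :=
  ⟨1, by simp [mem_normBall]⟩

theorem card_mul_card_normBall_le (α : Type*) [DecidableEq α] [Finite α] (p : ℕ) :
    Nat.card α * #(normBall α p) ≤ #(normBall α (p + 1)) := by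
  have := Fintype.ofFinite α
  choose sign hsign using fun (a : α) (w : FreeGroup α) =>
    exists_isReduced_cons a (isReduced_toWord (x := w))
  let extend (q : α × FreeGroup α) : FreeGroup α := mk ((q.1, sign q.1 q.2) :: q.2.toWord)
  have toWord_extend (q) : (extend q).toWord = (q.1, sign q.1 q.2) :: q.2.toWord := by
    rw [toWord_mk, (hsign _ _).reduce_eq]
  rw [Nat.card_eq_fintype_card, ← card_univ, ← card_product]
  refine card_le_card_of_injOn extend (fun q hq => ?_) (fun q _ q' _ h => ?_)
  · have hq2 : q.2.norm ≤ p := mem_normBall.1 (mem_product.1 hq).2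
    simpa [mem_normBall, FreeGroup.norm, toWord_extend] using hq2
  · have hword := congrArg toWord h
    rw [toWord_extend, toWord_extend, List.cons.injEq, Prod.mk.injEq, toWord_inj] at hword
    exact Prod.ext hword.1.1 hword.2

theorem card_pow_mul_card_normBall_le (α : Type*) [DecidableEq α] [Finite α] (p k : ℕ) :
    Nat.card α ^ k * #(normBall α p) ≤ #(normBall α (p + k)) := by
  induction k with
  | zero => simp
  | succ k ih =>
    calc Nat.card α ^ (k + 1) * #(normBall α p)
        = Nat.card α * (Nat.card α ^ k * #(normBall α p)) := by ring
      _ ≤ Nat.card α * #(normBall α (p + k)) := Nat.mul_le_mul_left _ ih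
      _ ≤ #(normBall α (p + k + 1)) := card_mul_card_normBall_le α _

theorem card_normBall_sub_div_card_normBall_le [Nonempty α] (h : k ≤ p) :
    (#(normBall α (p - k)) / #(normBall α p) : ℝ) ≤ (Nat.card α : ℝ)⁻¹ ^ k := by
  have hcard : (0 : ℝ) < Nat.card α := mod_cast Nat.card_pos
  have hball : (0 : ℝ) < #(normBall α p) := mod_cast normBall_nonempty.card_pos
  have hgrowth := card_pow_mul_card_normBall_le α (p - k) k
  rw [Nat.sub_add_cancel h] at hgrowth
  rw [inv_pow, div_le_iff₀ hball, ← div_eq_inv_mul, le_div_iff₀' (by positivity)]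
  exact_mod_cast hgrowth

theorem proportion_normBall_norm_lt_le [Nonempty α] (hk : k ≤ p) (hq : q ≤ p - k) :
    proportion (normBall α p) (fun y => y.norm < q) ≤ (Nat.card α : ℝ)⁻¹ ^ k :=
  (proportion_le_card_div_card_of_injOn id
    (fun _ _ hy => mem_normBall.2 (hy.le.trans hq)) Function.injective_id.injOn).trans
    (card_normBall_sub_div_card_normBall_le hk)

end Balls

section Events

variable {α : Type} [DecidableEq α] {m k l p : ℕ}

/-- The events excluded for a single entry `x` of a tuple: it is shorter than `2 * k + l`, or at
least `k` of its letters cancel in `x * x`. In the second case `x` is long enough for the cancelled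
prefix and suffix of `x` not to overlap. -/
def IsBadEntry (k l : ℕ) (x : FreeGroup α) : Prop :=
  x.norm < 2 * k + l ∨ 2 * k ≤ x.norm ∧ k ≤ cancelLen x x

/-- The events excluded for two entries of a tuple: with `q = (i, j, a, b)`, where `a` and `b`
encode signs, at least `k` letters cancel in the product of `(t i) ^ a` and `(t j) ^ b`, and
`i ≠ j`. -/
def IsBadPair (k : ℕ) (q : Fin m × Fin m × Bool × Bool) (t : Fin m → FreeGroup α) : Prop :=
  q.1 ≠ q.2.1 ∧ k ≤ cancelLen (pmPow q.2.2.1 (t q.1)) (pmPow q.2.2.2 (t q.2.1))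

theorem exists_isBadEntry_or_isBadPair {t : Fin m → FreeGroup α} (h : ¬ ∀ i, l ≤ remLen t i) :
    (∃ i, IsBadEntry k l (t i)) ∨ ∃ q, IsBadPair k q t := by
  by_contra! hgood
  obtain ⟨hentry, hpair⟩ := hgood
  refine h fun i => ?_
  obtain ⟨hlen, hself⟩ := not_or.1 (hentry i)
  have hlen : 2 * k + l ≤ (t i).norm := not_lt.1 hlen
  have hcross {i j : Fin m} (hij : i ≠ j) (a b : Bool) :
      cancelLen (pmPow a (t i)) (pmPow b (t j)) ≤ k :=
    le_of_not_ge fun hk => hpair (i, j, a, b) ⟨hij, hk⟩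
  exact le_remLen hlen (le_of_not_ge fun hk => hself ⟨by omega, hk⟩)
    (fun j hj a => hcross hj a true) (fun j hj a => hcross hj.symm true a)

variable [Finite α]

theorem card_div_card_pow_eq_proportion (P : (Fin m → FreeGroup α) → Prop) :
    (Nat.card {t : Fin m → FreeGroup α // P t ∧ ∀ i, (t i).norm ≤ p} : ℝ) /
        (Nat.card {w : FreeGroup α // w.norm ≤ p} : ℝ) ^ m =
      proportion (Fintype.piFinset fun _ => normBall α p) P := by
  classical
  rw [proportion_eq_card_filter_div, Fintype.card_piFinset_const,
    Nat.subtype_card (normBall α p) fun _ => mem_normBall,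
    Nat.subtype_card {t ∈ Fintype.piFinset fun _ => normBall α p | P t} fun t => ?_]
  · norm_cast
  · simp only [mem_filter, Fintype.mem_piFinset, mem_normBall, and_comm]

variable [Nonempty α]

theorem proportion_le_cancelLen_self_le (hk : k ≤ p) :
    proportion (normBall α p) (fun y => 2 * k ≤ y.norm ∧ k ≤ cancelLen y y) ≤
      (Nat.card α : ℝ)⁻¹ ^ k := by
  refine (proportion_le_card_div_card_of_injOn (B := normBall α (p - k)) (dropLetters k)
    (fun y hy _ => ?_) ?_).trans (card_normBall_sub_div_card_normBall_le hk)
  · rw [mem_normBall, norm_dropLetters]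
    exact Nat.sub_le_sub_right (mem_normBall.1 hy) k
  · exact (injOn_dropLetters fun L => (invRev L).take k).mono fun y hy =>
      take_toWord_of_le_cancelLen_self hy.2 hy.1

theorem proportion_le_cancelLen_pmPow_le (hk : k ≤ p) (x : FreeGroup α) (b : Bool) :
    proportion (normBall α p) (fun y => k ≤ cancelLen x (pmPow b y)) ≤
      (Nat.card α : ℝ)⁻¹ ^ k := by
  refine (proportion_le_card_div_card_of_injOn (B := normBall α (p - k))
    (dropLetters k ∘ pmPow b) (fun y hy _ => ?_) ?_).trans
    (card_normBall_sub_div_card_normBall_le hk)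
  · rw [mem_normBall, Function.comp_apply, norm_dropLetters, norm_pmPow]
    exact Nat.sub_le_sub_right (mem_normBall.1 hy) k
  · exact (injOn_dropLetters fun _ => x⁻¹.toWord.take k).comp (pmPow_injective b).injOn
      fun y hy => take_toWord_of_le_cancelLen hy

theorem proportion_isBadEntry_le (hp : 3 * k + l ≤ p) (i : Fin m) :
    proportion (Fintype.piFinset fun _ => normBall α p) (fun t => IsBadEntry k l (t i)) ≤
      2 * (Nat.card α : ℝ)⁻¹ ^ k := by
  refine proportion_piFinset_le (fun _ => normBall_nonempty) i fun t _ => ?_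
  simp only [Function.update_self]
  calc proportion (normBall α p) (IsBadEntry k l)
      ≤ proportion (normBall α p) (fun y => y.norm < 2 * k + l) +
          proportion (normBall α p) (fun y => 2 * k ≤ y.norm ∧ k ≤ cancelLen y y) :=
        proportion_or_le
    _ ≤ (Nat.card α : ℝ)⁻¹ ^ k + (Nat.card α : ℝ)⁻¹ ^ k :=
        add_le_add (proportion_normBall_norm_lt_le (by omega) (by omega))
          (proportion_le_cancelLen_self_le (by omega))
    _ = 2 * (Nat.card α : ℝ)⁻¹ ^ k := (two_mul _).symm

theorem proportion_isBadPair_le (hk : k ≤ p) (q : Fin m × Fin m × Bool × Bool) :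
    proportion (Fintype.piFinset fun _ => normBall α p) (IsBadPair k q) ≤
      (Nat.card α : ℝ)⁻¹ ^ k := by
  obtain ⟨i, j, a, b⟩ := q
  refine proportion_piFinset_le (fun _ => normBall_nonempty) j fun t _ => ?_
  refine (proportion_mono fun y _ hy => ?_).trans
    (proportion_le_cancelLen_pmPow_le hk (pmPow a (t i)) b)
  obtain ⟨hij, hcancel⟩ := hy
  simpa only [Function.update_self, Function.update_of_ne hij] using hcancel

theorem one_sub_le_proportion_le_remLen (hp : 3 * k + l ≤ p) :
    1 - (2 * m + 4 * m ^ 2) * (Nat.card α : ℝ)⁻¹ ^ k ≤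
      proportion (Fintype.piFinset fun _ : Fin m => normBall α p) fun t => ∀ i, l ≤ remLen t i := by
  rw [← one_sub_proportion_not (Fintype.piFinset_nonempty.2 fun _ => normBall_nonempty)]
  refine sub_le_sub_left ?_ 1
  set ε : ℝ := (Nat.card α : ℝ)⁻¹ ^ k
  set A := Fintype.piFinset fun _ : Fin m => normBall α p
  calc proportion A (fun t => ¬ ∀ i, l ≤ remLen t i)
      ≤ proportion A (fun t => (∃ i, IsBadEntry k l (t i)) ∨ ∃ q, IsBadPair k q t) :=
        proportion_mono fun _ _ => exists_isBadEntry_or_isBadPair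
    _ ≤ proportion A (fun t => ∃ i, IsBadEntry k l (t i)) +
          proportion A (fun t => ∃ q, IsBadPair k q t) := proportion_or_le
    _ ≤ Fintype.card (Fin m) * (2 * ε) + Fintype.card (Fin m × Fin m × Bool × Bool) * ε :=
        add_le_add (proportion_exists_le (proportion_isBadEntry_le hp))
          (proportion_exists_le (proportion_isBadPair_le (by omega)))
    _ = (2 * m + 4 * m ^ 2) * ε := by
        simp only [Fintype.card_prod, Fintype.card_fin, Fintype.card_bool]
        push_cast
        ring

end Events

end Remnant

open Remnant in
theorem generic_remnant_length_general {α : Type} [DecidableEq α] [Finite α] [Nontrivial α]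
    (m l : ℕ) :
    Tendsto (fun p : ℕ =>
      (Nat.card {t : Fin m → FreeGroup α //
          (∀ i, l ≤ remLen t i) ∧ ∀ i, (t i).norm ≤ p} : ℝ) /
        (Nat.card {w : FreeGroup α // w.norm ≤ p} : ℝ) ^ m)
      atTop (𝓝 1) := by
  simp only [card_div_card_pow_eq_proportion]
  have hrank : (Nat.card α : ℝ)⁻¹ < 1 := inv_lt_one_of_one_lt₀ (mod_cast Finite.one_lt_card)
  have hdecay : Tendsto (fun p : ℕ => (Nat.card α : ℝ)⁻¹ ^ (p / 4)) atTop (𝓝 0) :=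
    (tendsto_pow_atTop_nhds_zero_of_lt_one (by positivity) hrank).comp
      (Nat.tendsto_div_const_atTop four_ne_zero)
  have hlower : Tendsto (fun p : ℕ => 1 - (2 * m + 4 * m ^ 2) * (Nat.card α : ℝ)⁻¹ ^ (p / 4))
      atTop (𝓝 1) := by
    simpa using (hdecay.const_mul (2 * m + 4 * m ^ 2 : ℝ)).const_sub 1
  refine tendsto_of_tendsto_of_tendsto_of_le_of_le' hlower tendsto_const_nhds ?_
    (Eventually.of_forall fun _ => proportion_le_one)
  filter_upwards [eventually_ge_atTop (4 * l)] with p hp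
  exact one_sub_le_proportion_le_remLen (by omega)

/-- Let `G` be the free group on `m` generators and `H` the free group
of rank `n > 1`. For every `l ≥ 1`, the set of homomorphisms `G → H` with remnant length
at least `l` (identified with `m`-tuples in `H^m`) is generic: its asymptotic density in
`H^m` equals `1`. -/
theorem generic_remnant_length {m n l : ℕ} (hn : 1 < n) (hl : 1 ≤ l) :
    Filter.Tendsto (fun p : ℕ =>
      (Nat.card {f : Fin m → FreeGroup (Fin n) //
          (∀ i, l ≤ remLen f i) ∧ ∀ i, FreeGroup.norm (f i) ≤ p} : ℝ) /
        (ballCount n p : ℝ) ^ m)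
      Filter.atTop (nhds 1) := by
  have : Nontrivial (Fin n) := Fin.nontrivial_iff_two_le.2 hn
  exact generic_remnant_length_general m l
end
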